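/- arXiv:1008.0825 — 6 statements merged into one kernel-verified Lean document; each statement's English description precedes it below -/
import Mathlib

section
/- For every odd integer n ≥ 3 there exists a matrix γ in SL(2, ℤ[i]) (2×2 matrices over the Gaussian integers with determinant 1) whose norm squared equals n, i.e. ‖γ‖² = |a|² + |b|² + |c|² + |d|² = n where a, b, c, d are the entries of γ and |·|² denotes the complex absolute value squared (so |a|² = a₁² + a₂² for a = a₁ + i a₂). -/
open Matrix

/-- Rounding: shift `f` by a multiple of `a` into the range `[-a/2, a/2]`. -/
lemma exists_shift (a f : ℤ) (ha : 0 < a) :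
    ∃ k : ℤ, -a ≤ 2 * (f + k * a) ∧ 2 * (f + k * a) ≤ a := by
  refine ⟨-((2 * f + a) / (2 * a)), ?_, ?_⟩
  · have h1 := Int.emod_add_mul_ediv (2 * f + a) (2 * a)
    have h2 := Int.emod_nonneg (2 * f + a) (show 2 * a ≠ 0 by omega)
    nlinarith
  · have h1 := Int.emod_add_mul_ediv (2 * f + a) (2 * a)
    have h2 := Int.emod_lt_of_pos (2 * f + a) (show 0 < 2 * a by omega)
    nlinarith

/-- Positive definite integral ternary forms of determinant one only represent
sums of three squares. -/
lemma ternary_aux (m : ℕ) : ∀ t : ℕ, ∀ a b c d e f : ℤ, a = m → a * b - f ^ 2 = t →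
    0 < a → 0 < a * b - f ^ 2 →
    a * b * c + 2 * d * e * f - a * d ^ 2 - b * e ^ 2 - c * f ^ 2 = 1 →
    ∀ x y z : ℤ, ∃ u v w : ℤ,
      a * x ^ 2 + b * y ^ 2 + c * z ^ 2 + 2 * d * y * z + 2 * e * x * z + 2 * f * x * y
        = u ^ 2 + v ^ 2 + w ^ 2 := by
  induction m using Nat.strong_induction_on with
  | _ m ihm =>
  intro t
  induction t using Nat.strong_induction_on with
  | _ t iht =>
  have key : ∀ a b c d e f : ℤ, a = m → a * b - f ^ 2 = t →
    0 < a → 0 < a * b - f ^ 2 →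
    a * b * c + 2 * d * e * f - a * d ^ 2 - b * e ^ 2 - c * f ^ 2 = 1 →
    -a ≤ 2 * f → 2 * f ≤ a → -(a * b - f ^ 2) ≤ 2 * (a * d - e * f) →
    2 * (a * d - e * f) ≤ a * b - f ^ 2 →
    ∀ x y z : ℤ, ∃ u v w : ℤ,
      a * x ^ 2 + b * y ^ 2 + c * z ^ 2 + 2 * d * y * z + 2 * e * x * z + 2 * f * x * y
        = u ^ 2 + v ^ 2 + w ^ 2 := by
    intro a b c d e f ham hDt ha hD hdet hf1 hf2 hg1 hg2 x y z
    have hb : 0 < b := by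
      by_contra hb
      nlinarith [sq_nonneg f]
    have hG : (a * b - f ^ 2) * (a * c - e ^ 2) - (a * d - e * f) ^ 2 = a := by
      linear_combination a * hdet
    have hG2 : 0 < a * c - e ^ 2 := by
      by_contra hb
      nlinarith [sq_nonneg (a * d - e * f)]
    by_cases hba : b < a
    · obtain ⟨u, v, w, h⟩ := ihm b.toNat (by omega) (b * a - f ^ 2).toNat b a c e d f
        (by omega) (by rw [Int.toNat_of_nonneg]; nlinarith) hb (by linarith)
        (by linear_combination hdet) y x z
      exact ⟨u, v, w, by linear_combination h⟩
    by_cases hcb : a * c - e ^ 2 < a * b - f ^ 2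
    · obtain ⟨u, v, w, h⟩ := iht (a * c - e ^ 2).toNat (by omega) a c b d f e ham
        (by omega) ha hG2 (by linear_combination hdet) x z y
      exact ⟨u, v, w, by linear_combination h⟩
    push Not at hba hcb
    have hA : 3 * a ^ 2 ≤ 4 * (a * b - f ^ 2) := by
      have h1 : (2 * f) ^ 2 ≤ a ^ 2 := sq_le_sq' hf1 hf2
      nlinarith
    generalize hDD : a * b - f ^ 2 = D at *
    have hB : 3 * D ^ 2 ≤ 4 * a := by
      have h1 : (2 * (a * d - e * f)) ^ 2 ≤ D ^ 2 := sq_le_sq' hg1 hg2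
      nlinarith
    have ha1 : a = 1 := by
      by_contra hne
      have : 2 ≤ a := by omega
      nlinarith
    have hD1 : D = 1 := by
      by_contra hne
      have : 2 ≤ D := by omega
      nlinarith
    subst ha1 hD1
    have hf : f = 0 := by omega
    subst hf
    have hd : d = 0 := by omega
    subst hd
    have hb1 : b = 1 := by linarith
    subst hb1
    exact ⟨x + e * z, y, z, by linear_combination z ^ 2 * hdet⟩
  intro a b c d e f ham hDt ha hD hdet x y z
  obtain ⟨k, hk1, hk2⟩ := exists_shift (a * b - f ^ 2) (a * d - e * f) hD
  obtain ⟨l, hl1, hl2⟩ := exists_shift a f ha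
  have hDeq : a * (b + 2 * l * f + l ^ 2 * a) - (f + l * a) ^ 2 = a * b - f ^ 2 := by ring
  have hGeq : a * ((d + k * b) + l * (e + k * f)) - (e + k * f) * (f + l * a)
      = a * d - e * f + k * (a * b - f ^ 2) := by ring
  obtain ⟨u, v, w, h⟩ := key a (b + 2 * l * f + l ^ 2 * a) (c + 2 * k * d + k ^ 2 * b)
    ((d + k * b) + l * (e + k * f)) (e + k * f) (f + l * a) ham (hDeq.trans hDt) ha
    (by rw [hDeq]; exact hD) (by linear_combination hdet) hl1 hl2
    (by rw [hDeq, hGeq]; exact hk1) (by rw [hDeq, hGeq]; exact hk2)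
    (x - l * (y - k * z)) (y - k * z) z
  exact ⟨u, v, w, by linear_combination h⟩

open NumberTheorySymbols in
/-- The auxiliary prime: `-d` is a square modulo `d N - 1`. -/
lemma exists_aux (k : ℕ) : ∃ d r s : ℤ, 0 < d ∧
    r ^ 2 + d = s * (d * (8 * k + 5) - 1) := by
  have hcop : (12 * k + 7).Coprime (4 * (8 * k + 5)) := by
    rw [← Nat.isCoprime_iff_coprime]
    push_cast
    refine IsCoprime.mul_right ?_ ?_
    · have : IsCoprime (12 * (k : ℤ) + 7) 2 := ⟨1, -(6 * k + 3), by ring⟩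
      have h := this.mul_right this
      norm_num at h
      exact h
    · exact ⟨-2, 3, by ring⟩
  obtain ⟨p, hpgt, hp, hpm⟩ :=
    Nat.forall_exists_prime_gt_and_modEq (12 * k + 7) (by omega) hcop
  obtain ⟨j, hj⟩ := (Nat.modEq_iff_dvd' hpgt.le).1 hpm.symm
  have hpj : p = 12 * k + 7 + 4 * (8 * k + 5) * j := by omega
  have : Fact p.Prime := ⟨hp⟩
  have hp4 : p % 4 = 3 := by
    rw [hpj, mul_assoc]; omega
  have hpodd : Odd p := Nat.odd_iff.2 (by omega)
  have hdodd : Odd (8 * j + 3) := Nat.odd_iff.2 (by omega)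
  have hJ2 : J(2 | 8 * j + 3) = -1 := by
    rw [jacobiSym.at_two hdodd, ZMod.χ₈_nat_eq_if_mod_eight]
    rw [if_neg (by omega), if_neg (by omega)]
  have hJm : J(-1 | 8 * j + 3) = -1 := by
    rw [jacobiSym.at_neg_one hdodd, ZMod.χ₄_nat_three_mod_four (by omega)]
  have hJ2p : J(2 * p | 8 * j + 3) = -1 := by
    rw [← hJm]
    apply jacobiSym.mod_left'
    apply Int.ModEq.symm
    rw [Int.modEq_iff_dvd]
    exact ⟨8 * k + 5, by rw [hpj]; push_cast; ring⟩
  have hJp : J(p | 8 * j + 3) = 1 := by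
    rw [jacobiSym.mul_left, hJ2] at hJ2p
    linarith
  have hJd : J(-((8 * j + 3 : ℕ) : ℤ) | p) = 1 := by
    rw [← neg_one_mul, jacobiSym.mul_left, jacobiSym.at_neg_one hpodd,
      ZMod.χ₄_nat_three_mod_four hp4,
      jacobiSym.quadratic_reciprocity_three_mod_four (by omega) hp4, hJp]
    norm_num
  rw [← jacobiSym.legendreSym.to_jacobiSym] at hJd
  have hne : ((-((8 * j + 3 : ℕ) : ℤ) : ℤ) : ZMod p) ≠ 0 := by
    intro h0
    rw [(legendreSym.eq_zero_iff p _).2 h0] at hJd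
    norm_num at hJd
  rw [legendreSym.eq_one_iff p hne] at hJd
  obtain ⟨y, hy⟩ := hJd
  obtain ⟨r, rfl⟩ := ZMod.intCast_surjective y
  have hdvd : (p : ℤ) ∣ r ^ 2 + (8 * j + 3) := by
    rw [← ZMod.intCast_zmod_eq_zero_iff_dvd] 
    push_cast at hy ⊢
    linear_combination -hy
  have h2p : (8 * (j : ℤ) + 3) * (8 * k + 5) - 1 = 2 * p := by
    rw [hpj]; push_cast; ring
  have hpoddZ : ∃ q : ℤ, (p : ℤ) = 2 * q + 1 := by
    obtain ⟨q, hq⟩ := hpodd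
    exact ⟨q, by rw [hq]; push_cast; ring⟩
  obtain ⟨q, hq⟩ := hpoddZ
  have main : ∃ r : ℤ, (p : ℤ) ∣ r ^ 2 + (8 * j + 3) ∧ Odd r := by
    rcases Int.even_or_odd r with hr | hr
    · refine ⟨r + p, ?_, hr.add_odd ⟨q, hq⟩⟩
      have : (r + p) ^ 2 + (8 * (j : ℤ) + 3) = (r ^ 2 + (8 * j + 3)) + p * (2 * r + p) := by ring
      rw [this]
      exact dvd_add hdvd (dvd_mul_right _ _)
    · exact ⟨r, hdvd, hr⟩
  obtain ⟨r', hr', hro⟩ := main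
  have h2 : (2 : ℤ) ∣ r' ^ 2 + (8 * j + 3) := by
    obtain ⟨g, hg⟩ := hro
    exact ⟨2 * g ^ 2 + 2 * g + 4 * j + 2, by rw [hg]; ring⟩
  have hc2 : IsCoprime (2 : ℤ) p := ⟨-q, 1, by rw [hq]; ring⟩
  obtain ⟨s, hs⟩ := hc2.mul_dvd h2 hr'
  exact ⟨8 * j + 3, r', s, by omega, by rw [h2p, hs]; ring⟩

/-- Numbers congruent to 5 modulo 8 are sums of three squares. -/
lemma three_squares (k : ℕ) : ∃ u v w : ℤ, (8 * k + 5 : ℤ) = u ^ 2 + v ^ 2 + w ^ 2 := by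
  obtain ⟨d, r, s, hd, h⟩ := exists_aux k
  have hpos : 0 < d * (8 * (k : ℤ) + 5) - 1 := by nlinarith
  have hs : 0 < s := by
    by_contra hs
    nlinarith [sq_nonneg r]
  have hD : s * (d * (8 * (k : ℤ) + 5) - 1) - r ^ 2 = d := by linarith
  obtain ⟨u, v, w, h⟩ := ternary_aux s.toNat d.toNat s (d * (8 * k + 5) - 1) (8 * k + 5)
    0 1 r (by omega) (by omega) hs (by omega)
    (by linear_combination -(8 * (k : ℤ) + 5) * h) 0 0 1
  exact ⟨u, v, w, by linear_combination h⟩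

/-- Every positive definite unimodular binary Hermitian form over `ℤ[i]` is `γ γ*`. -/
lemma hermitian_aux (m : ℕ) : ∀ p q u v : ℤ, p = m → 0 < p → p * q = 1 + u ^ 2 + v ^ 2 →
    ∃ a1 a2 b1 b2 c1 c2 d1 d2 : ℤ,
      a1 * d1 - a2 * d2 - b1 * c1 + b2 * c2 = 1 ∧
      a1 * d2 + a2 * d1 - b1 * c2 - b2 * c1 = 0 ∧
      a1 ^ 2 + a2 ^ 2 + b1 ^ 2 + b2 ^ 2 = p ∧
      c1 ^ 2 + c2 ^ 2 + d1 ^ 2 + d2 ^ 2 = q ∧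
      a1 * c1 + a2 * c2 + b1 * d1 + b2 * d2 = u ∧
      a2 * c1 - a1 * c2 + b2 * d1 - b1 * d2 = v := by
  induction m using Nat.strong_induction_on with
  | _ m ih =>
  intro p q u v hpm hp h
  by_cases hp1 : p = 1
  · subst hp1
    exact ⟨1, 0, 0, 0, u, -v, 1, 0, by ring, by ring, by ring, by linear_combination -h,
      by ring, by ring⟩
  have hp2 : 2 ≤ p := by omega
  obtain ⟨s, hs1, hs2⟩ := exists_shift p u hp
  obtain ⟨t, ht1, ht2⟩ := exists_shift p v hp
  have hsq1 := sq_le_sq' hs1 hs2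
  have hsq2 := sq_le_sq' ht1 ht2
  obtain ⟨q', hq'⟩ : ∃ q', q' = q + 2 * (s * u + t * v) + (s ^ 2 + t ^ 2) * p := ⟨_, rfl⟩
  have h' : q' * p = 1 + (-(u + s * p)) ^ 2 + (v + t * p) ^ 2 := by
    rw [hq']; linear_combination h
  have hq'0 : 0 < q' := by
    by_contra hn
    nlinarith [sq_nonneg (-(u + s * p)), sq_nonneg (v + t * p)]
  have hq'p : q' < p := by
    by_contra hn
    nlinarith
  obtain ⟨a1, a2, b1, b2, c1, c2, d1, d2, e1, e2, e3, e4, e5, e6⟩ :=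
    ih q'.toNat (by omega) q' p (-(u + s * p)) (v + t * p) (by omega) hq'0 h'
  refine ⟨c1, c2, d1, d2, -a1 + (-s) * c1 - t * c2, -a2 + (-s) * c2 + t * c1,
    -b1 + (-s) * d1 - t * d2, -b2 + (-s) * d2 + t * d1, ?_, ?_, e4, ?_, ?_, ?_⟩
  · linear_combination e1
  · linear_combination e2
  · linear_combination e3 + (s ^ 2 + t ^ 2) * e4 + 2 * s * e5 - 2 * t * e6 + hq'
  · linear_combination -e5 - s * e4
  · linear_combination e6 - t * e4

lemma from_squares (n m u v : ℤ) (hn : 3 ≤ n) (hodd : Odd n) (hm : Odd m)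
    (h : n ^ 2 - 4 = m ^ 2 + (2 * u) ^ 2 + (2 * v) ^ 2) :
    ∃ γ : Matrix.SpecialLinearGroup (Fin 2) GaussianInt,
      Zsqrtd.norm (γ.1 0 0) + Zsqrtd.norm (γ.1 0 1) +
        Zsqrtd.norm (γ.1 1 0) + Zsqrtd.norm (γ.1 1 1) = n := by
  obtain ⟨x, rfl⟩ := hodd
  obtain ⟨y, rfl⟩ := hm
  have hpq : (x + y + 1) * (x - y) = 1 + u ^ 2 + v ^ 2 := by
    have : 4 * ((x + y + 1) * (x - y)) = 4 * (1 + u ^ 2 + v ^ 2) := by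
      linear_combination h
    linarith
  have hp : 0 < x + y + 1 := by
    by_contra hc
    nlinarith [sq_nonneg u, sq_nonneg v]
  obtain ⟨a1, a2, b1, b2, c1, c2, d1, d2, e1, e2, e3, e4, -, -⟩ :=
    hermitian_aux (x + y + 1).toNat (x + y + 1) (x - y) u v (by omega) hp hpq
  refine ⟨⟨!![⟨a1, a2⟩, ⟨b1, b2⟩; ⟨c1, c2⟩, ⟨d1, d2⟩], ?_⟩, ?_⟩
  · rw [Matrix.det_fin_two_of]
    apply Zsqrtd.ext
    · simp
      linear_combination e1
    · simp
      linear_combination e2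
  · simp [Zsqrtd.norm_def]
    linear_combination e3 + e4

/-- For every odd integer `n ≥ 3` there exists `γ ∈ SL(2, ℤ[i])` with
`‖γ‖² = |a|² + |b|² + |c|² + |d|² = n`, where `|z|² = z.re² + z.im²` is the
squared complex absolute value of the Gaussian integer `z` (i.e. `Zsqrtd.norm`). -/
theorem sl2_gaussian_norm_sq_eq_odd (n : ℤ) (hodd : Odd n) (hn : 3 ≤ n) :
    ∃ γ : Matrix.SpecialLinearGroup (Fin 2) GaussianInt,
      Zsqrtd.norm (γ.1 0 0) + Zsqrtd.norm (γ.1 0 1) +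
        Zsqrtd.norm (γ.1 1 0) + Zsqrtd.norm (γ.1 1 1) = n := by
  obtain ⟨j, hj⟩ : ∃ j : ℕ, n = 2 * j + 3 := by
    obtain ⟨x, rfl⟩ := hodd
    exact ⟨(x - 1).toNat, by omega⟩
  obtain ⟨k, hk⟩ : ∃ k : ℕ, n ^ 2 - 4 = 8 * k + 5 := by
    obtain ⟨i, hi⟩ := Nat.even_mul_succ_self j
    refine ⟨i + j, ?_⟩
    have hi' : (j : ℤ) * (j + 1) = i + i := by exact_mod_cast hi
    rw [hj]
    push_cast
    linear_combination 4 * hi'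
  obtain ⟨u, v, w, h⟩ := three_squares k
  rw [← hk] at h
  obtain ⟨c, hc⟩ : ∃ c : ℤ, n ^ 2 - 4 = 4 * c + 1 := ⟨2 * k + 1, by rw [hk]; ring⟩
  rw [hc] at h
  rcases Int.even_or_odd' u with ⟨x, rfl | rfl⟩ <;>
  rcases Int.even_or_odd' v with ⟨y, rfl | rfl⟩ <;>
  rcases Int.even_or_odd' w with ⟨z, rfl | rfl⟩
  · ring_nf at h; omega
  · exact from_squares n (2 * z + 1) x y hn hodd ⟨z, rfl⟩ (by linear_combination hc + h)
  · exact from_squares n (2 * y + 1) x z hn hodd ⟨y, rfl⟩ (by linear_combination hc + h)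
  · ring_nf at h; omega
  · exact from_squares n (2 * x + 1) y z hn hodd ⟨x, rfl⟩ (by linear_combination hc + h)
  · ring_nf at h; omega
  · ring_nf at h; omega
  · ring_nf at h; omega
end

section
/- For every prime number p there exists a matrix γ in SL(2, ℤ[i]) whose norm squared equals p, i.e. ‖γ‖² = p. (For p = 2 one may take γ to be the identity matrix; all odd primes are covered by the representation of all odd n ≥ 3.) -/
open Matrix

/-- Rounding to the nearest integer multiple. -/
theorem exists_round (a d : ℤ) (ha : 0 < a) : ∃ t : ℤ, -a ≤ 2 * (d + t * a) ∧ 2 * (d + t * a) ≤ a := by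
  refine ⟨-((2 * d + a) / (2 * a)), ?_⟩
  have h1 := Int.emod_add_mul_ediv (2 * d + a) (2 * a)
  have h2 := Int.emod_nonneg (2 * d + a) (b := 2 * a) (by omega)
  have h3 := Int.emod_lt_of_pos (2 * d + a) (b := 2 * a) (by omega)
  constructor <;> nlinarith

/-- The Gram matrix `[[a,d,e],[d,b,f],[e,f,c]]` is realised by three vectors of `ℤ³`. -/
def Rep3 (a b c d e f : ℤ) : Prop :=
  ∃ u1 u2 u3 v1 v2 v3 w1 w2 w3 : ℤ,
    u1 * u1 + u2 * u2 + u3 * u3 = a ∧ v1 * v1 + v2 * v2 + v3 * v3 = b ∧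
    w1 * w1 + w2 * w2 + w3 * w3 = c ∧ u1 * v1 + u2 * v2 + u3 * v3 = d ∧
    u1 * w1 + u2 * w2 + u3 * w3 = e ∧ v1 * w1 + v2 * w2 + v3 * w3 = f

theorem Rep3.swapUV {a b c d e f : ℤ} (h : Rep3 b a c d f e) : Rep3 a b c d e f := by
  obtain ⟨u1, u2, u3, v1, v2, v3, w1, w2, w3, h1, h2, h3, h4, h5, h6⟩ := h
  exact ⟨v1, v2, v3, u1, u2, u3, w1, w2, w3, h2, h1, h3, by linarith, h6, h5⟩

theorem Rep3.swapVW {a b c d e f : ℤ} (h : Rep3 a c b e d f) : Rep3 a b c d e f := by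
  obtain ⟨u1, u2, u3, v1, v2, v3, w1, w2, w3, h1, h2, h3, h4, h5, h6⟩ := h
  exact ⟨u1, u2, u3, w1, w2, w3, v1, v2, v3, h1, h3, h2, h5, h4, by linarith⟩

theorem Rep3.shiftV {a b c d e f : ℤ} (t : ℤ)
    (h : Rep3 a (b + 2 * t * d + t ^ 2 * a) c (d + t * a) e (f + t * e)) : Rep3 a b c d e f := by
  obtain ⟨u1, u2, u3, v1, v2, v3, w1, w2, w3, h1, h2, h3, h4, h5, h6⟩ := h
  refine ⟨u1, u2, u3, v1 - t * u1, v2 - t * u2, v3 - t * u3, w1, w2, w3, h1, ?_, h3, ?_, h5, ?_⟩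
  · linear_combination h2 - 2 * t * h4 + t ^ 2 * h1
  · linear_combination h4 - t * h1
  · linear_combination h6 - t * h5

theorem Rep3.shiftW {a b c d e f : ℤ} (t : ℤ)
    (h : Rep3 a b (c + 2 * t * f + t ^ 2 * b) d (e + t * d) (f + t * b)) : Rep3 a b c d e f := by
  obtain ⟨u1, u2, u3, v1, v2, v3, w1, w2, w3, h1, h2, h3, h4, h5, h6⟩ := h
  refine ⟨u1, u2, u3, v1, v2, v3, w1 - t * v1, w2 - t * v2, w3 - t * v3, h1, h2, ?_, h4, ?_, ?_⟩
  · linear_combination h3 - 2 * t * h6 + t ^ 2 * h2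
  · linear_combination h5 - t * h4
  · linear_combination h6 - t * h2

/-- The reduced case. -/
theorem rep3_reduced (a b c d e f : ℤ) (ha : 0 < a) (hE : 0 < a * b - d ^ 2)
    (hdet : (a * b - d ^ 2) * (a * c - e ^ 2) - (a * f - d * e) ^ 2 = a)
    (hd1 : -a ≤ 2 * d) (hd2 : 2 * d ≤ a)
    (hF1 : -(a * b - d ^ 2) ≤ 2 * (a * f - d * e)) (hF2 : 2 * (a * f - d * e) ≤ a * b - d ^ 2)
    (hab : a ≤ b) (hEC : a * b - d ^ 2 ≤ a * c - e ^ 2) : Rep3 a b c d e f := by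
  have h1 : 3 * (a * b - d ^ 2) ^ 2 ≤ 4 * a := by nlinarith
  have h2 : 3 * a ^ 2 ≤ 4 * (a * b - d ^ 2) := by nlinarith
  have ha1 : a = 1 := by
    by_contra hne
    have h2a : 2 ≤ a := by omega
    have : 9 * (a ^ 2) ^ 2 ≤ 16 * (a * b - d ^ 2) ^ 2 := by nlinarith
    have h3 : 27 * (a ^ 2) ^ 2 ≤ 64 * a := by linarith
    have h4 : 4 ≤ a ^ 2 := by nlinarith
    nlinarith
  subst ha1
  have hd : d = 0 := by omega
  subst hd
  have hb : b = 1 := by nlinarith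
  subst hb
  have hf : f = 0 := by
    have h5 : -1 ≤ 2 * f := by linarith
    have h6 : 2 * f ≤ 1 := by linarith
    omega
  subst hf
  exact ⟨1, 0, 0, 0, 1, 0, e, 0, 1, by ring, by ring, by linarith, by ring, by ring, by ring⟩

theorem rep3_all (N : ℕ) : ∀ K : ℕ, ∀ a b c d e f : ℤ, a ≤ N → a * b - d ^ 2 ≤ K → 0 < a →
    0 < a * b - d ^ 2 →
    (a * b - d ^ 2) * (a * c - e ^ 2) - (a * f - d * e) ^ 2 = a → Rep3 a b c d e f := by
  induction N with
  | zero => intro K a b c d e f h1 _ h2; push_cast at h1; omega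
  | succ N ihN =>
    intro K
    induction K with
    | zero => intro a b c d e f _ h1 _ h2; push_cast at h1; omega
    | succ K ihK =>
      intro a b c d e f haN hEK ha hE hdet
      push_cast at haN hEK
      obtain ⟨t, ht1, ht2⟩ := exists_round a d ha
      apply Rep3.shiftV t
      obtain ⟨b', hb'⟩ : ∃ b', b' = b + 2 * t * d + t ^ 2 * a := ⟨_, rfl⟩
      obtain ⟨d', hd'⟩ : ∃ d', d' = d + t * a := ⟨_, rfl⟩
      obtain ⟨f', hf'⟩ : ∃ f', f' = f + t * e := ⟨_, rfl⟩
      rw [← hb', ← hd', ← hf']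
      rw [← hd'] at ht1 ht2
      have e1 : a * b - d ^ 2 = a * b' - d' ^ 2 := by rw [hb', hd']; ring
      have e2 : a * f - d * e = a * f' - d' * e := by rw [hf', hd']; ring
      rw [e1] at hE hEK hdet
      rw [e2] at hdet
      clear e1 e2 hb' hd' hf' b d f
      obtain ⟨s, hs1, hs2⟩ := exists_round (a * b' - d' ^ 2) (a * f' - d' * e) hE
      apply Rep3.shiftW s
      obtain ⟨c', hc'⟩ : ∃ c', c' = c + 2 * s * f' + s ^ 2 * b' := ⟨_, rfl⟩
      obtain ⟨e', he'⟩ : ∃ e', e' = e + s * d' := ⟨_, rfl⟩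
      obtain ⟨g, hg⟩ : ∃ g, g = f' + s * b' := ⟨_, rfl⟩
      rw [← hc', ← he', ← hg]
      have e1 : a * f' - d' * e + s * (a * b' - d' ^ 2) = a * g - d' * e' := by
        rw [hg, he']; ring
      have hdet' : (a * b' - d' ^ 2) * (a * c' - e' ^ 2) - (a * g - d' * e') ^ 2 = a := by
        rw [hg, he', hc']; linear_combination hdet
      rw [e1] at hs1 hs2
      clear e1 hdet hc' he' hg c e f'
      by_cases hab : a ≤ b'
      · by_cases hEC : a * b' - d' ^ 2 ≤ a * c' - e' ^ 2
        · exact rep3_reduced a b' c' d' e' g ha hE hdet' ht1 ht2 hs1 hs2 hab hEC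
        · apply Rep3.swapVW
          apply ihK
          · push_cast; exact haN
          · linarith [not_le.mp hEC]
          · exact ha
          · have := sq_nonneg (a * g - d' * e')
            exact pos_of_mul_pos_right (a := a * b' - d' ^ 2) (by linarith) hE.le
          · linear_combination hdet'
      · have hb0 : 0 < b' := by
          have := sq_nonneg d'
          exact pos_of_mul_pos_right (a := a) (by linarith) ha.le
        apply Rep3.swapUV
        apply ihN (a * b' - d' ^ 2).toNat
        · linarith [not_le.mp hab]
        · rw [Int.toNat_of_nonneg hE.le]; linarith
        · exact hb0
        · linarith
        · have hD : a * (b' * (a * c' - e' ^ 2) - d' * (d' * c' - e' * g) - (a * g ^ 2 - d' * e' * g)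
              - 1) = 0 - (0 : ℤ) := by linear_combination hdet'
          have hD' := (mul_eq_zero.mp (hD.trans (sub_self 0))).resolve_left ha.ne'
          linear_combination b' * hD'

/-- The three squares theorem for `m ≡ 5 mod 8`. -/
theorem three_squares_s1 (m : ℕ) (hm : m % 8 = 5) : ∃ x y z : ℤ, x * x + y * y + z * z = (m : ℤ) := by
  obtain ⟨r, hr⟩ : ∃ r, 2 * r + 1 = 3 * m := ⟨(3 * m - 1) / 2, by omega⟩
  have hcop : IsCoprime (r : ℤ) ((4 * m : ℕ) : ℤ) := by
    have h1 : IsCoprime (r : ℤ) (m : ℤ) := ⟨-2, 3, by zify at hr; linarith⟩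
    have h2 : IsCoprime (r : ℤ) (2 : ℤ) := by
      obtain ⟨k, hk⟩ : ∃ k, r = 2 * k + 1 := ⟨r / 2, by omega⟩
      exact ⟨1, -k, by rw [hk]; push_cast; ring⟩
    have h3 := (h2.mul_right h2).mul_right h1
    push_cast
    norm_num at h3
    exact h3
  obtain ⟨p, hpgt, hp, hpm⟩ := Nat.forall_exists_prime_gt_and_zmodEq r (q := 4 * m) (by omega) hcop
  obtain ⟨v, hv⟩ := hpm.symm.dvd
  push_cast at hv
  have hv0 : 0 ≤ v := by
    have : (0 : ℤ) < 4 * m * v := by rw [← hv]; push_cast; omega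
    exact (pos_of_mul_pos_right this (by positivity)).le
  lift v to ℕ using hv0
  have hpv : p = r + 4 * m * v := by zify; linarith
  obtain ⟨D, hD⟩ : ∃ D, D = 8 * v + 3 := ⟨_, rfl⟩
  have h2p : 2 * p + 1 = D * m := by rw [hpv, hD]; nlinarith
  have hp4 : p % 4 = 3 := by
    have : 4 * m * v = 4 * (m * v) := by ring
    omega
  have : Fact p.Prime := ⟨hp⟩
  have hDodd : Odd D := ⟨4 * v + 1, by omega⟩
  have hJ : jacobiSym (-(D : ℤ)) p = 1 := by
    have e1 : jacobiSym (-2) D = 1 := by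
      rw [jacobiSym.at_neg_two hDodd, ZMod.χ₈'_nat_eq_if_mod_eight]
      have h3 : D % 8 = 3 := by omega
      have h4 : D % 2 = 1 := by omega
      simp [h3, h4]
    have e2 : jacobiSym (-2 * (p : ℤ)) D = 1 := by
      rw [← jacobiSym.one_left D]
      apply jacobiSym.mod_left'
      apply Int.emod_emod_of_dvd _ (dvd_refl _) |>.symm.trans
      rw [show -2 * (p : ℤ) = 1 + (D : ℤ) * (-m) by zify at h2p; linarith]
      simp
    rw [jacobiSym.mul_left, e1, one_mul] at e2
    rw [neg_eq_neg_one_mul, jacobiSym.mul_left, jacobiSym.at_neg_one (Nat.odd_iff.mpr (by omega)),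
      ZMod.χ₄_nat_three_mod_four hp4,
      jacobiSym.quadratic_reciprocity_three_mod_four (by omega) hp4, e2]
    norm_num
  obtain ⟨y, hy⟩ := ZMod.isSquare_of_jacobiSym_eq_one hJ
  have hdvd : (p : ℤ) ∣ (D : ℤ) + (y.val : ℤ) ^ 2 := by
    rw [← ZMod.intCast_zmod_eq_zero_iff_dvd]
    push_cast at hy ⊢
    rw [ZMod.natCast_zmod_val]
    linear_combination -hy
  obtain ⟨d, hdodd, hd⟩ : ∃ d : ℤ, d % 2 = 1 ∧ (p : ℤ) ∣ (D : ℤ) + d ^ 2 := by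
    rcases Int.emod_two_eq_zero_or_one (y.val : ℤ) with h | h
    · refine ⟨y.val + p, by omega, ?_⟩
      have : (D : ℤ) + ((y.val : ℤ) + p) ^ 2 = (D + (y.val : ℤ) ^ 2) + p * (2 * y.val + p) := by ring
      rw [this]
      exact dvd_add hdvd (dvd_mul_right _ _)
    · exact ⟨y.val, h, hdvd⟩
  have h2d : (2 : ℤ) ∣ (D : ℤ) + d ^ 2 := by
    obtain ⟨k, hk⟩ : ∃ k, d = 2 * k + 1 := ⟨d / 2, by omega⟩
    refine ⟨4 * v + 2 + 2 * k ^ 2 + 2 * k, ?_⟩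
    rw [hD, hk]; push_cast; ring
  have hc2 : IsCoprime (2 : ℤ) (p : ℤ) := by
    obtain ⟨k, hk⟩ : ∃ k, p = 2 * k + 1 := ⟨p / 2, by omega⟩
    exact ⟨-k, 1, by rw [hk]; push_cast; ring⟩
  obtain ⟨a, haa⟩ := hc2.mul_dvd h2d hd
  have hDpos : (0 : ℤ) < D := by omega
  have ha0 : 0 < a := by
    have : (0 : ℤ) < 2 * p * a := by rw [← haa]; positivity
    exact pos_of_mul_pos_right this (by positivity)
  have hE : a * (2 * p) - d ^ 2 = D := by linarith
  zify at h2p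
  obtain ⟨u1, u2, u3, v1, v2, v3, w1, w2, w3, -, -, h, -⟩ :=
    rep3_all a.toNat D a (2 * p) m d 1 0 (by omega) hE.le ha0 (by rw [hE]; exact hDpos)
      (by rw [hE]; linear_combination (-a) * h2p + hE)
  exact ⟨w1, w2, w3, h⟩

/-- Every positive definite unimodular binary Hermitian form over `ℤ[i]` is `γ γ*`. -/
theorem herm_rep (N : ℕ) : ∀ A D x y : ℤ, A ≤ N → 0 < A → A * D - x ^ 2 - y ^ 2 = 1 →
    ∃ a a' b b' c c' d d' : ℤ, a ^ 2 + a' ^ 2 + b ^ 2 + b' ^ 2 = A ∧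
      c ^ 2 + c' ^ 2 + d ^ 2 + d' ^ 2 = D ∧
      a * c + a' * c' + b * d + b' * d' = x ∧ a' * c - a * c' + b' * d - b * d' = y ∧
      a * d - a' * d' - b * c + b' * c' = 1 ∧ a * d' + a' * d - b * c' - b' * c = 0 := by
  induction N with
  | zero => intro A D x y h1 h2; push_cast at h1; omega
  | succ N ih =>
    intro A D x y hN hA hdet
    push_cast at hN
    by_cases h1 : A = 1
    · subst h1
      exact ⟨1, 0, 0, 0, x, -y, 1, 0, by ring, by linarith, by ring, by ring, by ring, by ring⟩
    obtain ⟨s, hs1, hs2⟩ := exists_round A x hA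
    obtain ⟨t, ht1, ht2⟩ := exists_round A y hA
    obtain ⟨X, hX⟩ : ∃ X, X = x + s * A := ⟨_, rfl⟩
    obtain ⟨Y, hY⟩ : ∃ Y, Y = y + t * A := ⟨_, rfl⟩
    obtain ⟨D', hD'⟩ : ∃ D', D' = D + 2 * (s * x + t * y) + (s ^ 2 + t ^ 2) * A := ⟨_, rfl⟩
    have hdet' : A * D' - X ^ 2 - Y ^ 2 = 1 := by rw [hX, hY, hD', ← hdet]; ring
    rw [← hX] at hs1 hs2
    rw [← hY] at ht1 ht2
    have hx : 4 * X ^ 2 ≤ A ^ 2 := by nlinarith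
    have hy : 4 * Y ^ 2 ≤ A ^ 2 := by nlinarith
    have hA2 : 2 ≤ A := by omega
    have hlt : D' < A := by
      by_contra hcon
      have : A * A ≤ A * D' := by nlinarith
      nlinarith
    have hpos : 0 < D' := by
      have h5 := sq_nonneg X
      have h6 := sq_nonneg Y
      exact pos_of_mul_pos_right (a := A) (by linarith) hA.le
    obtain ⟨a, a', b, b', c, c', d, d', e1, e2, e3, e4, e5, e6⟩ :=
      ih D' A (-X) Y (by linarith) hpos (by linarith)
    refine ⟨c, c', d, d', -a - s * c - t * c', -a' - s * c' + t * c, -b - s * d - t * d',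
      -b' - s * d' + t * d, e2, ?_, ?_, ?_, ?_, ?_⟩
    · linear_combination e1 + 2 * s * e3 - 2 * t * e4 + (s ^ 2 + t ^ 2) * e2 + hD' - 2 * s * hX - 2 * t * hY
    · linear_combination -e3 - s * e2 + hX
    · linear_combination e4 - t * e2 + hY
    · linear_combination e5
    · linear_combination e6

theorem of_odd_square (n k x y : ℤ) (hn : 0 < n) (hn2 : n % 2 = 1) (hk : k % 2 = 1)
    (h : k ^ 2 + (2 * x) ^ 2 + (2 * y) ^ 2 = n ^ 2 - 4) :
    ∃ γ : Matrix.SpecialLinearGroup (Fin 2) GaussianInt,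
      Zsqrtd.norm (γ.1 0 0) + Zsqrtd.norm (γ.1 0 1) +
        Zsqrtd.norm (γ.1 1 0) + Zsqrtd.norm (γ.1 1 1) = n := by
  obtain ⟨A, hA⟩ : ∃ A, n + k = 2 * A := ⟨(n + k) / 2, by omega⟩
  obtain ⟨D, hD⟩ : ∃ D, n - k = 2 * D := ⟨(n - k) / 2, by omega⟩
  have hn' : n = A + D := by linarith
  have hk' : k = A - D := by linarith
  have hdet : A * D - x ^ 2 - y ^ 2 = 1 := by
    rw [hn', hk'] at h; linarith
  have hpos : 0 < A := by
    by_contra hcon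
    have : 0 < D := by linarith
    nlinarith [sq_nonneg x, sq_nonneg y]
  obtain ⟨a, a', b, b', c, c', d, d', e1, e2, e3, e4, e5, e6⟩ :=
    herm_rep A.toNat A D x y (by omega) hpos hdet
  refine ⟨⟨!![⟨a, a'⟩, ⟨b, b'⟩; ⟨c, c'⟩, ⟨d, d'⟩], ?_⟩, ?_⟩
  · rw [Matrix.det_fin_two_of]
    ext
    · simp
      linear_combination e5
    · simp
      linear_combination e6
  · simp [Zsqrtd.norm_def]
    linear_combination e1 + e2 - hn'

/-- For every prime `p` there exists `γ ∈ SL(2, ℤ[i])` with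
`‖γ‖² = |a|² + |b|² + |c|² + |d|² = p`, where `|z|²` is the squared complex
absolute value of the Gaussian integer `z` (i.e. `Zsqrtd.norm`). -/
theorem sl2_gaussian_norm_sq_eq_prime (p : ℕ) (hp : p.Prime) :
    ∃ γ : Matrix.SpecialLinearGroup (Fin 2) GaussianInt,
      Zsqrtd.norm (γ.1 0 0) + Zsqrtd.norm (γ.1 0 1) +
        Zsqrtd.norm (γ.1 1 0) + Zsqrtd.norm (γ.1 1 1) = (p : ℤ) := by
  rcases hp.eq_two_or_odd with rfl | hodd
  · exact ⟨1, by simp⟩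
  have h2 := hp.two_le
  obtain ⟨j, hj⟩ : ∃ j, p = 2 * j + 3 := ⟨(p - 3) / 2, by omega⟩
  obtain ⟨q, hq⟩ := Nat.even_mul_succ_self (j + 1)
  have hm : (8 * q - 3 : ℤ) = (p : ℤ) ^ 2 - 4 := by
    zify at hq; rw [hj]; push_cast; push_cast at hq; linarith
  have hq1 : 1 ≤ q := by
    by_contra hcon
    have : q = 0 := by omega
    subst this
    simp at hq
  obtain ⟨x, y, z, h⟩ := three_squares_s1 (8 * q - 3) (by omega)
  have h' : x * x + y * y + z * z = (p : ℤ) ^ 2 - 4 := by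
    rw [h, ← hm]; omega
  have hmod : x * x + y * y + z * z = 8 * q - 3 := by rw [h', hm]
  have hp0 : (0 : ℤ) < p := by omega
  have hp1 : (p : ℤ) % 2 = 1 := by omega
  rcases Int.even_or_odd' x with ⟨x, rfl | rfl⟩ <;> rcases Int.even_or_odd' y with ⟨y, rfl | rfl⟩ <;>
    rcases Int.even_or_odd' z with ⟨z, rfl | rfl⟩ <;> ring_nf at hmod
  · omega
  · exact of_odd_square p (2 * z + 1) x y hp0 hp1 (by omega) (by linarith)
  · exact of_odd_square p (2 * y + 1) x z hp0 hp1 (by omega) (by linarith)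
  · omega
  · exact of_odd_square p (2 * x + 1) y z hp0 hp1 (by omega) (by linarith)
  · omega
  · omega
  · omega
end

section
/- Let n ≥ 3 be an odd integer and let p be an odd prime with p ∤ (n² − 4). Then there exists T ≥ 1 such that for every t ≥ T, the number of 2×4 matrices X over ℤ/p^tℤ satisfying X·Xᵀ = G_n (mod p^t) equals p^{5t} · (1 − p^{−2}) · (1 + χ_p(4 − n²)/p), i.e. equals p^{5t−3} · (p² − 1) · (p + χ_p(4 − n²)), where χ_p denotes the Legendre symbol modulo p. -/
open Matrix
namespace LD

/-- number of representations of `c` as a sum of `k` squares -/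
noncomputable def rep (k : ℕ) (R : Type) [CommRing R] (c : R) : ℕ :=
  Nat.card {v : Fin k → R // ∑ i, v i ^ 2 = c}

set_option maxHeartbeats 2000000 in
lemma pair_card {R : Type} [CommRing R] (a b d : R) (hd : a * d = 1) :
    Nat.card {X : Matrix (Fin 2) (Fin 4) R // X * Xᵀ = !![a, 0; 0, b]} =
      rep 4 R a * rep 3 R (a * b) := by
  unfold rep
  rw [← Nat.card_prod]
  have key : ∀ X : Matrix (Fin 2) (Fin 4) R, X * Xᵀ = !![a, 0; 0, b] ↔
      (X 0 0 ^ 2 + X 0 1 ^ 2 + X 0 2 ^ 2 + X 0 3 ^ 2 = a ∧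
       X 1 0 ^ 2 + X 1 1 ^ 2 + X 1 2 ^ 2 + X 1 3 ^ 2 = b ∧
       X 0 0 * X 1 0 + X 0 1 * X 1 1 + X 0 2 * X 1 2 + X 0 3 * X 1 3 = 0) := by
    intro X
    rw [← Matrix.ext_iff]
    simp only [Fin.forall_fin_two, Matrix.mul_apply, Fin.sum_univ_four, Matrix.transpose_apply]
    simp
    constructor
    · rintro ⟨⟨h1, h2⟩, h3, h4⟩
      exact ⟨by linear_combination h1, by linear_combination h4, h2⟩
    · rintro ⟨h1, h2, h3⟩
      exact ⟨⟨by linear_combination h1, h3⟩, by linear_combination h3, by linear_combination h2⟩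
  refine Nat.card_congr ?_
  refine
    { toFun := fun X => (⟨X.1 0, ?_⟩,
        ⟨![X.1 0 0 * X.1 1 1 - X.1 0 1 * X.1 1 0 - X.1 0 2 * X.1 1 3 + X.1 0 3 * X.1 1 2,
           X.1 0 0 * X.1 1 2 + X.1 0 1 * X.1 1 3 - X.1 0 2 * X.1 1 0 - X.1 0 3 * X.1 1 1,
           X.1 0 0 * X.1 1 3 - X.1 0 1 * X.1 1 2 + X.1 0 2 * X.1 1 1 - X.1 0 3 * X.1 1 0], ?_⟩)
      invFun := fun q => ⟨Matrix.of ![q.1.1,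
        ![d * (- q.1.1 1 * q.2.1 0 - q.1.1 2 * q.2.1 1 - q.1.1 3 * q.2.1 2),
          d * (q.1.1 0 * q.2.1 0 + q.1.1 2 * q.2.1 2 - q.1.1 3 * q.2.1 1),
          d * (q.1.1 0 * q.2.1 1 - q.1.1 1 * q.2.1 2 + q.1.1 3 * q.2.1 0),
          d * (q.1.1 0 * q.2.1 2 + q.1.1 1 * q.2.1 1 - q.1.1 2 * q.2.1 0)]], ?_⟩
      left_inv := ?_
      right_inv := ?_ }
  · have := ((key _).1 X.2).1
    simpa [Fin.sum_univ_four] using this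
  · obtain ⟨h1, h2, h3⟩ := (key _).1 X.2
    simp [Fin.sum_univ_three]
    generalize X.1 0 0 = x0 at *
    generalize X.1 0 1 = x1 at *
    generalize X.1 0 2 = x2 at *
    generalize X.1 0 3 = x3 at *
    generalize X.1 1 0 = y0 at *
    generalize X.1 1 1 = y1 at *
    generalize X.1 1 2 = y2 at *
    generalize X.1 1 3 = y3 at *
    linear_combination (y0 ^ 2 + y1 ^ 2 + y2 ^ 2 + y3 ^ 2) * h1 + a * h2 -
      (x0 * y0 + x1 * y1 + x2 * y2 + x3 * y3) * h3
  · obtain ⟨⟨x, hx⟩, ⟨z, hz⟩⟩ := q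
    rw [key]
    clear key
    rw [Fin.sum_univ_four] at hx
    rw [Fin.sum_univ_three] at hz
    simp
    refine ⟨hx, ?_, ?_⟩
    · linear_combination d ^ 2 * (z 0 ^ 2 + z 1 ^ 2 + z 2 ^ 2) * hx + d ^ 2 * a * hz +
        (b * a * d + b) * hd
    · ring
  · rintro ⟨X, hX⟩
    obtain ⟨h1, h2, h3⟩ := (key _).1 hX
    apply Subtype.ext
    ext i j
    fin_cases i
    · simp
    · fin_cases j <;> simp
      · linear_combination (d * X 1 0) * h1 + X 1 0 * hd - d * X 0 0 * h3
      · linear_combination (d * X 1 1) * h1 + X 1 1 * hd - d * X 0 1 * h3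
      · linear_combination (d * X 1 2) * h1 + X 1 2 * hd - d * X 0 2 * h3
      · linear_combination (d * X 1 3) * h1 + X 1 3 * hd - d * X 0 3 * h3
  · rintro ⟨⟨x, hx⟩, ⟨z, hz⟩⟩
    simp [Fin.sum_univ_four] at hx
    refine Prod.ext (Subtype.ext ?_) (Subtype.ext ?_)
    · ext j
      simp
    · ext j
      fin_cases j <;> simp
      · linear_combination (d * z 0) * hx + z 0 * hd
      · linear_combination (d * z 1) * hx + z 1 * hd
      · linear_combination (d * z 2) * hx + z 2 * hd

lemma card_preimage {A B : Type} [AddCommGroup A] [AddCommGroup B] [Finite A] [Finite B]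
    (φ : A →+ B) (hφ : Function.Surjective φ) (P : B → Prop) :
    Nat.card {a // P (φ a)} * Nat.card B = Nat.card A * Nat.card {b // P b} := by
  have h : ∀ Q : B → Prop, Nat.card {a // Q (φ a)} = Nat.card φ.ker * Nat.card {b // Q b} := by
    intro Q
    rw [mul_comm, ← Nat.card_prod]
    choose s hs using hφ
    refine Nat.card_congr
      { toFun := fun a => (⟨φ a.1, a.2⟩, ⟨a.1 - s (φ a.1), by simp [AddMonoidHom.mem_ker, hs]⟩)
        invFun := fun q => ⟨q.2.1 + s q.1.1, by
          have := q.2.2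
          rw [AddMonoidHom.mem_ker] at this
          simpa [this, hs] using q.1.2⟩
        left_inv := fun a => by simp
        right_inv := fun q => by
          have := q.2.2
          rw [AddMonoidHom.mem_ker] at this
          refine Prod.ext (Subtype.ext ?_) (Subtype.ext ?_) <;> simp [this, hs] }
  have h1 := h P
  have h2 := h (fun _ => True)
  rw [Nat.card_congr (Equiv.subtypeUnivEquiv (fun _ => trivial)),
    Nat.card_congr (Equiv.subtypeUnivEquiv (fun _ => trivial))] at h2
  rw [h1, h2]; ring

lemma exists_sqrt (p : ℕ) [Fact p.Prime] (hp : p ≠ 2) (s : ℕ) (u : ZMod (p ^ (s + 1)))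
    (hu : ZMod.castHom (dvd_pow_self p s.succ_ne_zero) (ZMod p) u = 1) : ∃ w, IsUnit w ∧ w ^ 2 = u := by
  obtain ⟨z, rfl⟩ := ZMod.intCast_surjective u
  have h1 : (p : ℤ) ∣ z - 1 := by
    rw [← ZMod.intCast_zmod_eq_zero_iff_dvd] 
    rw [map_intCast] at hu
    push_cast; rw [hu]; ring
  have h2 := dvd_sub_pow_of_dvd_sub h1 s
  have h3 : (z : ZMod (p ^ (s + 1))) ^ (p ^ s) = 1 := by
    have := (ZMod.intCast_zmod_eq_zero_iff_dvd (z ^ p ^ s - 1 ^ p ^ s) (p ^ (s+1))).2 (by exact_mod_cast h2)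
    push_cast at this
    rw [one_pow] at this
    exact sub_eq_zero.1 this
  have hop : Odd (p ^ s) := (Nat.Prime.odd_of_ne_two Fact.out hp).pow
  obtain ⟨m, hm⟩ := hop
  have hs : ((z : ZMod (p ^ (s + 1))) ^ (m + 1)) ^ 2 = z := by
    rw [← pow_mul, show (m + 1) * 2 = p ^ s + 1 by omega, pow_succ (z : ZMod (p ^ (s + 1))), h3, one_mul]
  refine ⟨_, ?_, hs⟩
  exact (IsUnit.of_pow_eq_one h3 (by omega)).pow _

lemma rep_scale {R : Type} [CommRing R] (k : ℕ) (c w : R) (hw : IsUnit w) :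
    rep k R (w ^ 2 * c) = rep k R c := by
  obtain ⟨w, rfl⟩ := hw
  unfold rep
  refine Nat.card_congr (Equiv.subtypeEquiv (Equiv.piCongrRight fun _ => (Units.mulLeft w⁻¹)) ?_)
  intro v
  simp [mul_pow, ← Finset.mul_sum]
  constructor
  · intro h; rw [h, ← mul_assoc, ← mul_pow]; simp
  · intro h; rw [← h, ← mul_assoc, ← mul_pow]; simp

lemma rep_lift (p : ℕ) [Fact p.Prime] (hp : p ≠ 2) (s k : ℕ) (c : ℤ) (hc : ¬ (p : ℤ) ∣ c) :
    rep (k + 1) (ZMod (p ^ (s + 1))) c = p ^ (k * s) * rep (k + 1) (ZMod p) c := by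
  set f := ZMod.castHom (dvd_pow_self p s.succ_ne_zero) (ZMod p) with hf
  have : NeZero p := ⟨(Fact.out : p.Prime).ne_zero⟩
  have hfs : Function.Surjective f := ZMod.castHom_surjective _
  have h1 := card_preimage f.toAddMonoidHom hfs (fun x => x = (c : ZMod p))
  have h2 := card_preimage (f.toAddMonoidHom.compLeft (Fin (k + 1)))
    (fun v => ⟨fun i => (hfs (v i)).choose, funext fun i => (hfs (v i)).choose_spec⟩)
    (fun v => ∑ i, v i ^ 2 = (c : ZMod p))
  have hcu : IsUnit (c : ZMod (p ^ (s + 1))) := by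
    have hcop : IsCoprime c ((p ^ (s + 1) : ℕ) : ℤ) := by
      push_cast
      exact (((Nat.prime_iff_prime_int.1 Fact.out).coprime_iff_not_dvd).2 hc).symm.pow_right
    obtain ⟨x, y, h⟩ := hcop
    have := congrArg (Int.cast : ℤ → ZMod (p ^ (s + 1))) h
    push_cast at this
    rw [show (p : ZMod (p ^ (s + 1))) ^ (s + 1) = 0 by exact_mod_cast ZMod.natCast_self _] at this
    exact IsUnit.of_mul_eq_one (x : ZMod (p ^ (s + 1))) (by linear_combination this)
  have h3 : Nat.card {v : Fin (k + 1) → ZMod (p ^ (s + 1)) // f (∑ i, v i ^ 2) = (c : ZMod p)} =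
      Nat.card {x // f x = (c : ZMod p)} * rep (k + 1) (ZMod (p ^ (s + 1))) c := by
    have e : {v : Fin (k + 1) → ZMod (p ^ (s + 1)) // f (∑ i, v i ^ 2) = (c : ZMod p)} ≃
      (Σ x : {x // f x = (c : ZMod p)}, {v : Fin (k + 1) → ZMod (p ^ (s + 1)) // ∑ i, v i ^ 2 = x.1}) :=
      { toFun := fun v => ⟨⟨_, v.2⟩, ⟨v.1, rfl⟩⟩
        invFun := fun q => ⟨q.2.1, by rw [q.2.2]; exact q.1.2⟩
        left_inv := fun v => rfl
        right_inv := by rintro ⟨⟨x, hx⟩, ⟨v, hv⟩⟩; dsimp at hv; subst hv; rfl }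
    have := Fintype.ofFinite {x // f x = (c : ZMod p)}
    rw [Nat.card_congr e, Nat.card_sigma]
    rw [Finset.sum_congr rfl (g := fun _ => rep (k + 1) (ZMod (p ^ (s + 1))) c)]
    · simp
    · rintro ⟨x, hx⟩ -
      obtain ⟨u, hu⟩ := hcu
      have hfc : f (u : ZMod (p ^ (s + 1))) = c := by rw [hu, map_intCast]
      have hone : f ((x : ZMod (p ^ (s + 1))) * (u⁻¹ : (ZMod (p ^ (s + 1)))ˣ)) = 1 := by
        rw [map_mul, hx, ← hfc, ← map_mul]; simp
      obtain ⟨w, hw, hw2⟩ := exists_sqrt p hp s _ hone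
      rw [← rep_scale _ _ w hw, hw2, ← hu, mul_assoc]
      simp [rep]
  have h4 : Nat.card {v : Fin (k + 1) → ZMod (p ^ (s + 1)) // f (∑ i, v i ^ 2) = (c : ZMod p)}
      * Nat.card (Fin (k+1) → ZMod p) = Nat.card (Fin (k + 1) → ZMod (p ^ (s + 1))) *
       rep (k + 1) (ZMod p) c := by
    rw [rep, ← h2]
    congr 2
    simp
  have h1' : Nat.card {x // f x = (c : ZMod p)} * p = p ^ (s + 1) := by
    have : Nat.card {x // f x = (c : ZMod p)} * Nat.card (ZMod p) =
      Nat.card (ZMod (p ^ (s + 1))) * Nat.card {b // b = (c : ZMod p)} := h1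
    simpa using this
  have hp0 : 0 < p := (Fact.out : p.Prime).pos
  have h1'' : Nat.card {x // f x = (c : ZMod p)} = p ^ s := by
    exact Nat.eq_of_mul_eq_mul_right hp0 (h1'.trans (pow_succ p s))
  rw [h3, h1''] at h4
  simp at h4
  have hpos : 0 < p ^ s * p ^ (k + 1) := by positivity
  apply Nat.eq_of_mul_eq_mul_left hpos
  rw [mul_right_comm, h4, ← pow_mul, ← mul_assoc, ← pow_add, ← pow_add]
  congr 2
  ring

section field
variable (p : ℕ) [Fact p.Prime] (hp : p ≠ 2)

lemma rep_zero (c : ZMod p) : (rep 0 (ZMod p) c : ℤ) = if c = 0 then 1 else 0 := by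
  unfold rep
  split_ifs with h
  · subst h
    simp
  · have : IsEmpty {v : Fin 0 → ZMod p // ∑ i, v i ^ 2 = c} := ⟨fun v => h (by simpa using v.2.symm)⟩
    rw [Nat.card_of_isEmpty]; rfl

lemma sum_sq (hp : p ≠ 2) (g : ZMod p → ℤ) :
    ∑ x : ZMod p, g (x ^ 2) = ∑ u : ZMod p, (1 + quadraticChar (ZMod p) u) * g u := by
  classical
  rw [← Finset.sum_fiberwise (Finset.univ) (fun x : ZMod p => x ^ 2)]
  refine Finset.sum_congr rfl fun u _ => ?_
  have h := quadraticChar_card_sqrts (F := ZMod p) (by rwa [ZMod.ringChar_zmod_n]) u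
  rw [add_comm, ← h, Finset.sum_congr rfl (g := fun _ => g u)]
  · rw [Finset.sum_const, nsmul_eq_mul]
    congr 3
    ext x; simp
  · intro x hx
    simp at hx
    rw [hx]

lemma rep_succ (hp : p ≠ 2) (k : ℕ) (c : ZMod p) : (rep (k + 1) (ZMod p) c : ℤ) =
    ∑ u : ZMod p, (1 + quadraticChar (ZMod p) u) * rep k (ZMod p) (c - u) := by
  rw [← sum_sq p hp (fun u => (rep k (ZMod p) (c - u) : ℤ))]
  have e : {v : Fin (k + 1) → ZMod p // ∑ i, v i ^ 2 = c} ≃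
      (Σ x : ZMod p, {v : Fin k → ZMod p // ∑ i, v i ^ 2 = c - x ^ 2}) :=
    { toFun := fun v => ⟨v.1 0, ⟨fun i => v.1 i.succ, by
        have := v.2; rw [Fin.sum_univ_succ] at this; linear_combination this⟩⟩
      invFun := fun q => ⟨Fin.cons q.1 q.2.1, by
        have := q.2.2; rw [Fin.sum_univ_succ]; simp [this]⟩
      left_inv := fun v => Subtype.ext (Fin.cons_self_tail v.1)
      right_inv := fun q => rfl }
  rw [rep, Nat.card_congr e, Nat.card_sigma]
  push_cast
  rfl

lemma sum_char (hp : p ≠ 2) : ∑ u : ZMod p, quadraticChar (ZMod p) u = 0 :=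
  quadraticChar_sum_zero (by rwa [ZMod.ringChar_zmod_n])

lemma rep_one (hp : p ≠ 2) (c : ZMod p) :
    (rep 1 (ZMod p) c : ℤ) = 1 + quadraticChar (ZMod p) c := by
  rw [rep_succ p hp]
  simp only [rep_zero, sub_eq_zero, mul_ite, mul_one, mul_zero]
  simp

lemma char_conv (hp : p ≠ 2) (c : ZMod p) :
    ∑ u : ZMod p, quadraticChar (ZMod p) u * quadraticChar (ZMod p) (c - u) =
      (if c = 0 then (p : ℤ) * quadraticChar (ZMod p) (-1) else 0) - quadraticChar (ZMod p) (-1) := by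
  have hne : ringChar (ZMod p) ≠ 2 := by rwa [ZMod.ringChar_zmod_n]
  split_ifs with h
  · subst h
    have : ∀ u : ZMod p, quadraticChar (ZMod p) u * quadraticChar (ZMod p) (0 - u) =
        quadraticChar (ZMod p) (-1) - (if u = 0 then quadraticChar (ZMod p) (-1) else 0) := by
      intro u
      split_ifs with hu
      · simp [hu]
      · rw [zero_sub, neg_eq_neg_one_mul, map_mul]
        have := quadraticChar_sq_one hu
        linear_combination quadraticChar (ZMod p) (-1) * this
    rw [Finset.sum_congr rfl fun u _ => this u, Finset.sum_sub_distrib]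
    simp
  · have hj := jacobiSum_nontrivial_inv (quadraticChar_ne_one hne)
    rw [(quadraticChar_isQuadratic (ZMod p)).inv, jacobiSum] at hj
    rw [zero_sub, ← hj, ← Equiv.sum_comp (Equiv.mulLeft₀ c h)]
    refine Finset.sum_congr rfl fun u _ => ?_
    change quadraticChar (ZMod p) (c * u) * quadraticChar (ZMod p) (c - c * u) = _
    rw [show c - c * u = c * (1 - u) by ring, map_mul, map_mul]
    linear_combination quadraticChar (ZMod p) u * quadraticChar (ZMod p) (1 - u) *
      quadraticChar_sq_one h

lemma rep_two (hp : p ≠ 2) (c : ZMod p) :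
    (rep 2 (ZMod p) c : ℤ) = p - quadraticChar (ZMod p) (-1) +
      (if c = 0 then (p : ℤ) * quadraticChar (ZMod p) (-1) else 0) := by
  rw [rep_succ p hp]
  simp only [rep_one p hp]
  have h1 := char_conv p hp c
  have h2 := sum_char p hp
  have h3 : ∑ u : ZMod p, quadraticChar (ZMod p) (c - u) = 0 := by
    rw [← h2]; exact (Equiv.subLeft c).sum_comp (fun u => quadraticChar (ZMod p) u)
  simp only [add_mul, mul_add, one_mul, mul_one, Finset.sum_add_distrib, h1, h2, h3]
  simp
  ring

lemma rep_three (hp : p ≠ 2) (c : ZMod p) :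
    (rep 3 (ZMod p) c : ℤ) = p ^ 2 + p * quadraticChar (ZMod p) (-c) := by
  rw [rep_succ p hp]
  simp only [rep_two p hp, mul_add, Finset.sum_add_distrib, ← Finset.sum_mul, sum_char p hp,
    sub_eq_zero, mul_ite, mul_zero]
  rw [neg_eq_neg_one_mul c, map_mul]
  simp [-quadraticChar_apply]
  ring

lemma rep_four (hp : p ≠ 2) (c : ZMod p) (hc : c ≠ 0) :
    (rep 4 (ZMod p) c : ℤ) = p ^ 3 - p := by
  rw [rep_succ p hp]
  have h1 := char_conv p hp c
  rw [if_neg hc, zero_sub] at h1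
  have h2 := sum_char p hp
  have h3 : ∑ u : ZMod p, quadraticChar (ZMod p) (c - u) = 0 := by
    rw [← h2]; exact (Equiv.subLeft c).sum_comp (fun u => quadraticChar (ZMod p) u)
  have hε := quadraticChar_sq_one (neg_ne_zero.2 (one_ne_zero (α := ZMod p)))
  have : ∀ u : ZMod p, (1 + quadraticChar (ZMod p) u) * (rep 3 (ZMod p) (c - u) : ℤ) =
      p ^ 2 + p ^ 2 * quadraticChar (ZMod p) u +
      p * quadraticChar (ZMod p) (-1) * quadraticChar (ZMod p) (c - u) +
      p * quadraticChar (ZMod p) (-1) *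
        (quadraticChar (ZMod p) u * quadraticChar (ZMod p) (c - u)) := by
    intro u
    rw [rep_three p hp, neg_eq_neg_one_mul, map_mul]
    ring
  simp only [this, Finset.sum_add_distrib, ← Finset.mul_sum, h1, h2, h3]
  simp [-quadraticChar_apply]
  linear_combination (-(p : ℤ)) * hε

end field

end LD

/-- Unramified local density: for odd `n ≥ 3` and an odd prime `p ∤ n² − 4`, for all
sufficiently large `t` the number of `2 × 4` matrices `X` over `ℤ/p^tℤ` with
`X Xᵀ = Gₙ = diag(n+2, n−2)` equals `p^{5t−3} (p² − 1) (p + χ_p(4 − n²))`, where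
`χ_p` is the Legendre symbol mod `p`. -/
theorem local_density_unramified (n : ℤ) (hodd : Odd n) (hn : 3 ≤ n)
    (p : ℕ) [Fact p.Prime] (hp : p ≠ 2) (hpn : ¬ (p : ℤ) ∣ n ^ 2 - 4) :
    ∃ T : ℕ, 1 ≤ T ∧ ∀ t : ℕ, T ≤ t →
      (Nat.card {X : Matrix (Fin 2) (Fin 4) (ZMod (p ^ t)) //
          X * Xᵀ = !![(n : ZMod (p ^ t)) + 2, 0; 0, (n : ZMod (p ^ t)) - 2]} : ℤ)
        = (p : ℤ) ^ (5 * t - 3) * ((p : ℤ) ^ 2 - 1) * ((p : ℤ) + legendreSym p (4 - n ^ 2)) := by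
  refine ⟨1, le_refl _, fun t ht => ?_⟩
  obtain ⟨s, rfl⟩ : ∃ s, t = s + 1 := ⟨t - 1, by omega⟩
  have hpp : Prime (p : ℤ) := Nat.prime_iff_prime_int.1 Fact.out
  have ha : ¬ (p : ℤ) ∣ n + 2 := fun h => hpn (by
    rw [show n ^ 2 - 4 = (n + 2) * (n - 2) by ring]; exact h.mul_right _)
  have hcop : IsCoprime (n + 2) ((p ^ (s + 1) : ℕ) : ℤ) := by
    push_cast
    exact ((hpp.coprime_iff_not_dvd).2 ha).symm.pow_right
  obtain ⟨x, y, h⟩ := hcop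
  have hx := congrArg (Int.cast : ℤ → ZMod (p ^ (s + 1))) h
  push_cast at hx
  rw [show (p : ZMod (p ^ (s + 1))) ^ (s + 1) = 0 by exact_mod_cast ZMod.natCast_self _] at hx
  rw [LD.pair_card _ _ (x : ZMod (p ^ (s + 1))) (by linear_combination hx)]
  have e1 : (n : ZMod (p ^ (s + 1))) + 2 = ((n + 2 : ℤ) : ZMod (p ^ (s + 1))) := by push_cast; ring
  have e2 : ((n : ZMod (p ^ (s + 1))) + 2) * ((n : ZMod (p ^ (s + 1))) - 2) =
      ((n ^ 2 - 4 : ℤ) : ZMod (p ^ (s + 1))) := by push_cast; ring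
  rw [e2, e1, LD.rep_lift p hp s 3 _ ha, LD.rep_lift p hp s 2 _ hpn]
  push_cast [-Int.cast_add, -Int.cast_sub]
  rw [LD.rep_four p hp _ (by rwa [Ne, ZMod.intCast_zmod_eq_zero_iff_dvd]), LD.rep_three p hp,
    legendreSym, ← Int.cast_neg, show -(n ^ 2 - 4) = 4 - n ^ 2 by ring,
    show 5 * (s + 1) - 3 = 3 * s + 2 * s + 2 by omega, pow_add, pow_add]
  ring
end

section
/- Let n ≥ 3 be an odd integer and let p ≥ 3 be a prime dividing n² − 4. Let a be the p-adic valuation of n + 2 and b the p-adic valuation of n − 2, with m = (n + 2)/p^a and k = (n − 2)/p^b (so p ∤ mk), and assume a ≤ b (otherwise exchange the roles of (a, m) and (b, k)). If a + b is even, then there exists T ≥ 1 such that for every t ≥ T, the number of 2×4 matrices X over ℤ/p^tℤ satisfying X·Xᵀ = G_n (mod p^t) equals p^{5t} · (p + 1) · ((p^{a+1} − 1)(χ_p(−mk) − 1) + (a + 1)(p² − 1) p^{(a+b)/2}) / p^{3 + (a+b)/2}, where χ_p denotes the Legendre symbol modulo p. -/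
open Matrix

namespace LD

lemma card_split {α : Type*} [Finite α] (P Q : α → Prop) :
    Nat.card {x // P x} = Nat.card {x // P x ∧ Q x} + Nat.card {x // P x ∧ ¬ Q x} := by
  classical
  have := Fintype.ofFinite α
  simp only [Nat.card_eq_fintype_card, Fintype.card_subtype]
  rw [← Finset.card_filter_add_card_filter_not (s := Finset.univ.filter P) Q, Finset.filter_filter,
    Finset.filter_filter]

/-- preimage count -/
lemma card_preimage_s6 {G H : Type*} [AddCommGroup G] [AddCommGroup H] [Finite G] [Finite H]
    (f : G →+ H) (S : H → Prop) (hS : ∀ h, S h → ∃ g, f g = h) :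
    Nat.card {g // S (f g)} = Nat.card f.ker * Nat.card {h // S h} := by
  choose! σ hσ using hS
  rw [← Nat.card_prod]
  refine Nat.card_congr
    { toFun := fun g => (⟨g.1 - σ (f g.1), by simp [AddMonoidHom.mem_ker, hσ _ g.2]⟩, ⟨f g.1, g.2⟩)
      invFun := fun q => ⟨q.1.1 + σ q.2.1, by
        have := q.1.2
        rw [AddMonoidHom.mem_ker] at this
        rw [map_add, this, hσ _ q.2.2, zero_add]; exact q.2.2⟩
      left_inv := fun g => by simp
      right_inv := fun q => by
        obtain ⟨⟨k, hk⟩, ⟨h, hh⟩⟩ := q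
        rw [AddMonoidHom.mem_ker] at hk
        simp [map_add, hk, hσ _ hh] }

variable (p : ℕ) [hpf : Fact p.Prime]

lemma isUnit_int (t : ℕ) (ht : 1 ≤ t) (z : ℤ) :
    IsUnit (z : ZMod (p ^ t)) ↔ ¬ (p : ℤ) ∣ z := by
  rw [ZMod.coe_int_isUnit_iff_isCoprime]
  push_cast
  rw [IsCoprime.pow_left_iff (by omega)]
  exact (Nat.prime_iff_prime_int.mp hpf.out).coprime_iff_not_dvd

lemma not_isUnit_iff (t : ℕ) (ht : 1 ≤ t) (x : ZMod (p ^ t)) :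
    ¬ IsUnit x ↔ ∃ y, x = p * y := by
  obtain ⟨z, rfl⟩ := ZMod.intCast_surjective x
  rw [isUnit_int p t ht, not_not]
  constructor
  · rintro ⟨y, rfl⟩; exact ⟨y, by push_cast; rfl⟩
  · rintro ⟨y, hy⟩
    obtain ⟨y, rfl⟩ := ZMod.intCast_surjective y
    have : ((z - p * y : ℤ) : ZMod (p ^ t)) = 0 := by push_cast; rw [hy]; ring
    rw [ZMod.intCast_zmod_eq_zero_iff_dvd] at this
    have h2 : (p : ℤ) ∣ z - p * y := dvd_trans (by push_cast; exact dvd_pow_self _ (by omega)) this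
    have h3 := dvd_add h2 (dvd_mul_right (p : ℤ) y)
    simpa using h3

lemma card_U (t : ℕ) (ht : 1 ≤ t) :
    Nat.card {x : ZMod (p ^ t) // IsUnit x} = p ^ (t - 1) * (p - 1) := by
  have : NeZero (p ^ t) := ⟨pow_ne_zero _ hpf.out.ne_zero⟩
  rw [← Nat.totient_prime_pow hpf.out (by omega), ← ZMod.card_units_eq_totient,
    ← Nat.card_eq_fintype_card]
  refine Nat.card_congr (Equiv.symm (Equiv.ofBijective (fun u : (ZMod (p ^ t))ˣ =>
    (⟨u, u.isUnit⟩ : {x : ZMod (p ^ t) // IsUnit x})) ⟨?_, ?_⟩))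
  · intro u v h; exact Units.ext (by simpa using h)
  · rintro ⟨x, u, rfl⟩; exact ⟨u, rfl⟩

lemma card_V (t : ℕ) (ht : 1 ≤ t) :
    Nat.card {x : ZMod (p ^ t) // ¬ IsUnit x} = p ^ (t - 1) := by
  have : NeZero (p ^ t) := ⟨pow_ne_zero _ hpf.out.ne_zero⟩
  have h := card_split (α := ZMod (p ^ t)) (fun _ => True) (fun x => IsUnit x)
  simp only [true_and] at h
  rw [card_U p t ht] at h
  have h1 : Nat.card {x : ZMod (p ^ t) // True} = p ^ t := by
    rw [Nat.card_congr (Equiv.subtypeUnivEquiv (fun _ => trivial))]; simp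
  obtain ⟨s, rfl⟩ : ∃ s, t = s + 1 := ⟨t - 1, by omega⟩
  obtain ⟨q, hq⟩ : ∃ q, p = q + 1 := ⟨p - 1, by have := hpf.out.pos; omega⟩
  rw [h1] at h
  simp only [Nat.add_sub_cancel] at h ⊢
  have : p ^ (s + 1) = p ^ s * (p - 1) + p ^ s := by
    rw [pow_succ]; nth_rw 2 [hq]; rw [hq]; simp; ring
  omega

lemma card_A (t : ℕ) (ht : 1 ≤ t) (m : ZMod (p ^ t)) (hm : IsUnit m) :
    Nat.card {x : ZMod (p ^ t) × ZMod (p ^ t) × ZMod (p ^ t) × ZMod (p ^ t) //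
      x.1 * x.2.1 + x.2.2.1 * x.2.2.2 = m} =
      p ^ (t - 1) * (p - 1) * p ^ t * p ^ t + p ^ (t - 1) * p ^ t * (p ^ (t - 1) * (p - 1)) := by
  have : NeZero (p ^ t) := ⟨pow_ne_zero _ hpf.out.ne_zero⟩
  rw [card_split _ (fun x => IsUnit x.1)]
  congr 1
  · trans Nat.card (({x : ZMod (p ^ t) // IsUnit x} × ZMod (p ^ t)) × ZMod (p ^ t))
    swap
    · simp only [Nat.card_prod, card_U p t ht, card_V p t ht, Nat.card_zmod]
    refine Nat.card_congr
      { toFun := fun x => ((⟨x.1.1, x.2.2⟩, x.1.2.2.1), x.1.2.2.2)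
        invFun := fun q => ⟨(q.1.1.1, Ring.inverse q.1.1.1 * (m - q.1.2 * q.2), q.1.2, q.2), by
          have h := Ring.mul_inverse_cancel _ q.1.1.2
          constructor
          · simp only; rw [← mul_assoc, h]; ring
          · exact q.1.1.2⟩
        left_inv := ?_
        right_inv := fun q => by simp }
    rintro ⟨⟨x, y, z, w⟩, h1, h2⟩
    simp only at h1 h2
    have h := Ring.inverse_mul_cancel _ h2
    simp only [Subtype.mk.injEq, Prod.mk.injEq, true_and, and_true]
    linear_combination (y) * h - Ring.inverse x * h1
  · trans Nat.card (({x : ZMod (p ^ t) // ¬ IsUnit x} × ZMod (p ^ t)) × {x : ZMod (p ^ t) // IsUnit x})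
    swap
    · simp only [Nat.card_prod, card_U p t ht, card_V p t ht, Nat.card_zmod]
    have key : ∀ x y z w : ZMod (p ^ t), x * y + z * w = m → ¬ IsUnit x → IsUnit z := by
      intro x y z w h hx
      by_contra hz
      obtain ⟨x', rfl⟩ := (not_isUnit_iff p t ht x).1 hx
      obtain ⟨z', rfl⟩ := (not_isUnit_iff p t ht z).1 hz
      exact (not_isUnit_iff p t ht m).2 ⟨x' * y + z' * w, by rw [← h]; ring⟩ hm
    refine Nat.card_congr
      { toFun := fun x => ((⟨x.1.1, x.2.2⟩, x.1.2.1), ⟨x.1.2.2.1, key _ _ _ _ x.2.1 x.2.2⟩)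
        invFun := fun q => ⟨(q.1.1.1, q.1.2, q.2.1, Ring.inverse q.2.1 * (m - q.1.1.1 * q.1.2)), by
          have h := Ring.mul_inverse_cancel _ q.2.2
          constructor
          · simp only; rw [← mul_assoc, h]; ring
          · exact q.1.1.2⟩
        left_inv := ?_
        right_inv := fun q => by simp }
    rintro ⟨⟨x, y, z, w⟩, h1, h2⟩
    have h := Ring.inverse_mul_cancel _ (key _ _ _ _ h1 h2)
    simp only at h1 h2 h
    simp only [Subtype.mk.injEq, Prod.mk.injEq, true_and]
    linear_combination (w) * h - Ring.inverse z * h1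

/-- Hensel for square roots, integer form. -/
lemma hensel_sq (hp : 3 ≤ p) (z r : ℤ) (hz : ¬ (p : ℤ) ∣ z) (h : (p : ℤ) ∣ r ^ 2 - z) (t : ℕ) :
    ∃ s : ℤ, (p : ℤ) ^ t ∣ s ^ 2 - z := by
  have hP := Nat.prime_iff_prime_int.mp hpf.out
  suffices ∀ t : ℕ, ∃ s : ℤ, (p : ℤ) ^ (t + 1) ∣ s ^ 2 - z by
    obtain ⟨s, hs⟩ := this t
    exact ⟨s, dvd_trans (pow_dvd_pow _ (Nat.le_succ _)) hs⟩
  intro t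
  induction t with
  | zero => exact ⟨r, by simpa using h⟩
  | succ t ih =>
    obtain ⟨s, c, hs⟩ := ih
    have hps : ¬ (p : ℤ) ∣ 2 * s := by
      intro hd
      rcases hP.dvd_or_dvd hd with h2 | h2
      · have := Int.le_of_dvd (by norm_num) h2
        omega
      · apply hz
        have : z = s * s - p * (p ^ t * c) := by rw [pow_succ] at hs; linear_combination -hs
        rw [this]
        exact dvd_sub (dvd_mul_of_dvd_left h2 _) (dvd_mul_right _ _)
    obtain ⟨u, v, huv⟩ := (hP.coprime_iff_not_dvd).2 hps
    -- u * p + v * (2 s) = 1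
    refine ⟨s - v * c * p ^ (t + 1), c * u + v ^ 2 * c ^ 2 * p ^ t, ?_⟩
    have : (s - v * c * (p : ℤ) ^ (t + 1)) ^ 2 - z
      = (s ^ 2 - z) - (v * (2 * s)) * c * p ^ (t + 1) + v ^ 2 * c ^ 2 * (p ^ (t + 1)) ^ 2 := by ring
    rw [this, hs]
    linear_combination (-c * (p : ℤ) ^ (t + 1)) * huv

lemma card_sqrt (hp : 3 ≤ p) (t : ℕ) (ht : 1 ≤ t) (z : ℤ) (hz : ¬ (p : ℤ) ∣ z) :
    (Nat.card {s : ZMod (p ^ t) // s ^ 2 = z} : ℤ) = 1 + legendreSym p z := by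
  have hP := Nat.prime_iff_prime_int.mp hpf.out
  have : NeZero (p ^ t) := ⟨pow_ne_zero _ hpf.out.ne_zero⟩
  have hz0 : (z : ZMod p) ≠ 0 := by rwa [Ne, ZMod.intCast_zmod_eq_zero_iff_dvd]
  rcases legendreSym.eq_one_or_neg_one p hz0 with h1 | h1
  · rw [h1]
    obtain ⟨r, hr⟩ := (legendreSym.eq_one_iff p hz0).1 h1
    obtain ⟨r, rfl⟩ := ZMod.intCast_surjective r
    have hd : (p : ℤ) ∣ r ^ 2 - z := by
      rw [← ZMod.intCast_zmod_eq_zero_iff_dvd]; push_cast; rw [hr]; ring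
    obtain ⟨s, hs⟩ := hensel_sq p hp z r hz hd t
    have hs' : (s : ZMod (p ^ t)) ^ 2 = z := by
      have : ((s ^ 2 - z : ℤ) : ZMod (p ^ t)) = 0 := by
        rw [ZMod.intCast_zmod_eq_zero_iff_dvd]; exact_mod_cast hs
      push_cast at this
      exact sub_eq_zero.1 this
    have hzu : IsUnit (z : ZMod (p ^ t)) := (isUnit_int p t ht z).2 hz
    have hsu : IsUnit (s : ZMod (p ^ t)) := by
      rw [← hs'] at hzu; exact (isUnit_pow_iff two_ne_zero).1 hzu
    have h2u : IsUnit (2 : ZMod (p ^ t)) := by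
      have := (isUnit_int p t ht 2).2 (fun h => by
        have := Int.le_of_dvd (by norm_num) h; omega)
      exact_mod_cast this
    have hne : (s : ZMod (p ^ t)) ≠ - s := by
      intro h
      have h3 : (2 : ZMod (p ^ t)) * s = 0 := by linear_combination h
      have h4 := h2u.mul hsu
      rw [h3] at h4
      have : Nontrivial (ZMod (p ^ t)) := by
        have : Fact (1 < p ^ t) := ⟨Nat.one_lt_pow (by omega) (by omega)⟩
        infer_instance
      exact not_isUnit_zero h4
    have hset : ∀ x : ZMod (p ^ t), x ^ 2 = z ↔ x ∈ ({(s : ZMod (p ^ t)), -(s : ZMod (p ^ t))} : Finset (ZMod (p ^ t))) := by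
      intro x
      simp only [Finset.mem_insert, Finset.mem_singleton]
      constructor
      · intro hx
        have hprod : (x - s) * (x + s) = 0 := by linear_combination hx - hs'
        by_cases hu : IsUnit (x - s)
        · right
          have := (hu.mul_right_eq_zero).1 hprod
          linear_combination this
        · left
          by_cases hu2 : IsUnit (x + s)
          · have := (hu2.mul_left_eq_zero).1 hprod
            linear_combination this
          · exfalso
            obtain ⟨a, ha⟩ := (not_isUnit_iff p t ht _).1 hu
            obtain ⟨b, hb⟩ := (not_isUnit_iff p t ht _).1 hu2
            exact (not_isUnit_iff p t ht _).2 ⟨b - a, by linear_combination hb - ha⟩ (h2u.mul hsu)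
      · rintro (rfl | rfl)
        · exact hs'
        · rw [neg_sq]; exact hs'
    rw [Nat.card_congr (Equiv.subtypeEquivRight hset), Nat.card_eq_fintype_card, Fintype.card_coe,
      Finset.card_pair hne]
    norm_num
  · rw [h1]
    have : IsEmpty {s : ZMod (p ^ t) // s ^ 2 = z} := by
      refine ⟨?_⟩
      rintro ⟨x, hx⟩
      obtain ⟨x, rfl⟩ := ZMod.intCast_surjective x
      rw [legendreSym.eq_neg_one_iff] at h1
      apply h1
      have h0 : ((x ^ 2 - z : ℤ) : ZMod (p ^ t)) = 0 := by push_cast; rw [hx]; ring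
      rw [ZMod.intCast_zmod_eq_zero_iff_dvd] at h0
      have h2 : (p : ℤ) ∣ x ^ 2 - z := dvd_trans (by push_cast; exact dvd_pow_self _ (by omega)) h0
      rw [← ZMod.intCast_zmod_eq_zero_iff_dvd] at h2
      push_cast at h2
      exact ⟨x, by linear_combination -h2⟩
    simp

/-- number of solutions of `u v = s² + e` -/
noncomputable def B (t : ℕ) (e : ℤ) : ℕ :=
  Nat.card {x : ZMod (p ^ t) × ZMod (p ^ t) × ZMod (p ^ t) // x.2.1 * x.2.2 = x.1 ^ 2 + e}

lemma card_Bunit (t : ℕ) (ht : 1 ≤ t) (e : ZMod (p ^ t)) :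
    Nat.card {x : ZMod (p ^ t) × ZMod (p ^ t) × ZMod (p ^ t) //
      x.2.1 * x.2.2 = x.1 ^ 2 + e ∧ IsUnit x.2.1} = p ^ t * (p ^ (t - 1) * (p - 1)) := by
  have : NeZero (p ^ t) := ⟨pow_ne_zero _ hpf.out.ne_zero⟩
  trans Nat.card (ZMod (p ^ t) × {x : ZMod (p ^ t) // IsUnit x})
  swap
  · simp only [Nat.card_prod, card_U p t ht, card_V p t ht, Nat.card_zmod]
  refine Nat.card_congr
    { toFun := fun x => (x.1.1, ⟨x.1.2.1, x.2.2⟩)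
      invFun := fun q => ⟨(q.1, q.2.1, Ring.inverse q.2.1 * (q.1 ^ 2 + e)), by
        have h := Ring.mul_inverse_cancel _ q.2.2
        constructor
        · simp only; rw [← mul_assoc, h]; ring
        · exact q.2.2⟩
      left_inv := ?_
      right_inv := fun q => by simp }
  rintro ⟨⟨x, y, z⟩, h1, h2⟩
  simp only at h1 h2
  have h := Ring.inverse_mul_cancel _ h2
  simp only [Subtype.mk.injEq, Prod.mk.injEq, true_and]
  linear_combination (z) * h - Ring.inverse y * h1

lemma B_zero (hp : 3 ≤ p) (t : ℕ) (ht : 1 ≤ t) (e : ℤ) (he : ¬ (p : ℤ) ∣ e) :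
    (B p t e : ℤ) * p = (p : ℤ) ^ (2 * t) * (p + legendreSym p (-e)) := by
  have : NeZero (p ^ t) := ⟨pow_ne_zero _ hpf.out.ne_zero⟩
  rw [B, card_split _ (fun x => IsUnit x.2.1), card_Bunit p t ht]
  have hfib : ∀ q : {x : ZMod (p ^ t) // ¬ IsUnit x} × ZMod (p ^ t),
      (Nat.card {s : ZMod (p ^ t) // s ^ 2 = q.1.1 * q.2 - e} : ℤ) = 1 + legendreSym p (-e) := by
    rintro ⟨⟨u, hu⟩, v⟩
    obtain ⟨u, rfl⟩ := (not_isUnit_iff p t ht u).1 hu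
    obtain ⟨u, rfl⟩ := ZMod.intCast_surjective u
    obtain ⟨v, rfl⟩ := ZMod.intCast_surjective v
    have h := card_sqrt p hp t ht (p * (u * v) - e) (by
      intro h
      apply he
      have := dvd_sub (dvd_mul_right (p : ℤ) (u * v)) h
      simpa using this)
    have h1 : legendreSym p (p * (u * v) - e) = legendreSym p (-e) := by
      simp [legendreSym]
    rw [h1] at h
    rw [← h]
    push_cast
    simp only [mul_assoc]
  have h2 : (Nat.card {x : ZMod (p ^ t) × ZMod (p ^ t) × ZMod (p ^ t) //
      x.2.1 * x.2.2 = x.1 ^ 2 + e ∧ ¬ IsUnit x.2.1} : ℤ)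
      = p ^ (t - 1) * p ^ t * (1 + legendreSym p (-e)) := by
    have e1 : {x : ZMod (p ^ t) × ZMod (p ^ t) × ZMod (p ^ t) //
      x.2.1 * x.2.2 = x.1 ^ 2 + e ∧ ¬ IsUnit x.2.1} ≃
      (Σ q : {x : ZMod (p ^ t) // ¬ IsUnit x} × ZMod (p ^ t),
        {s : ZMod (p ^ t) // s ^ 2 = q.1.1 * q.2 - e}) :=
      { toFun := fun x => ⟨(⟨x.1.2.1, x.2.2⟩, x.1.2.2), ⟨x.1.1, by linear_combination -x.2.1⟩⟩
        invFun := fun q => ⟨(q.2.1, q.1.1.1, q.1.2), by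
          refine ⟨?_, q.1.1.2⟩
          linear_combination -q.2.2⟩
        left_inv := fun x => rfl
        right_inv := fun q => rfl }
    have := Fintype.ofFinite ({x : ZMod (p ^ t) // ¬ IsUnit x} × ZMod (p ^ t))
    rw [Nat.card_congr e1, Nat.card_sigma, Nat.cast_sum, Finset.sum_congr rfl (fun q _ => hfib q),
      Finset.sum_const, Finset.card_univ, ← Nat.card_eq_fintype_card, Nat.card_prod,
      card_V p t ht, Nat.card_zmod, nsmul_eq_mul]
    push_cast
    rfl
  rw [Nat.cast_add, h2]
  obtain ⟨s, rfl⟩ : ∃ s, t = s + 1 := ⟨t - 1, by omega⟩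
  push_cast [Nat.cast_sub hpf.out.one_le]
  ring

lemma B_step_prim2 (t : ℕ) (ht : 1 ≤ t) (e : ℤ) :
    Nat.card {x : ZMod (p ^ t) × ZMod (p ^ t) × ZMod (p ^ t) //
      (x.2.1 * x.2.2 = x.1 ^ 2 + (p ^ 2 * e : ℤ) ∧ ¬ IsUnit x.2.1) ∧ IsUnit x.2.2} =
      p ^ (t - 1) * (p ^ (t - 1) * (p - 1)) := by
  have : NeZero (p ^ t) := ⟨pow_ne_zero _ hpf.out.ne_zero⟩
  rw [← card_U p t ht]
  conv_rhs => rw [← card_V p t ht]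
  rw [← Nat.card_prod]
  have key : ∀ s u v : ZMod (p ^ t), u * v = s ^ 2 + (p ^ 2 * e : ℤ) → ¬ IsUnit u → ¬ IsUnit s := by
    intro s u v h hu hs
    obtain ⟨u, rfl⟩ := (not_isUnit_iff p t ht u).1 hu
    refine (not_isUnit_iff p t ht _).2 ⟨u * v - p * e, ?_⟩ (hs.pow 2)
    push_cast at h
    linear_combination -h
  refine Nat.card_congr
    { toFun := fun x => (⟨x.1.1, key _ _ _ x.2.1.1 x.2.1.2⟩, ⟨x.1.2.2, x.2.2⟩)
      invFun := fun q => ⟨(q.1.1, Ring.inverse q.2.1 * (q.1.1 ^ 2 + (p ^ 2 * e : ℤ)), q.2.1), by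
        have h := Ring.inverse_mul_cancel _ q.2.2
        refine ⟨⟨?_, ?_⟩, q.2.2⟩
        · simp only
          linear_combination (q.1.1 ^ 2 + ((p ^ 2 * e : ℤ) : ZMod (p ^ t))) * h
        · obtain ⟨s, hs⟩ := (not_isUnit_iff p t ht q.1.1).1 q.1.2
          refine (not_isUnit_iff p t ht _).2 ⟨Ring.inverse q.2.1 * (p * s ^ 2 + p * e), ?_⟩
          simp only
          rw [hs]
          push_cast
          ring⟩
      left_inv := ?_
      right_inv := fun q => by simp }
  rintro ⟨⟨x, y, z⟩, ⟨h1, h2⟩, h3⟩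
  simp only at h1 h2 h3
  have h := Ring.inverse_mul_cancel _ h3
  simp only [Subtype.mk.injEq, Prod.mk.injEq, true_and, and_true]
  linear_combination (y) * h - Ring.inverse z * h1

lemma sq_mul_eq_zero (t : ℕ) (z : ℤ) :
    ((p ^ 2 * z : ℤ) : ZMod (p ^ (t + 2))) = 0 ↔ (z : ZMod (p ^ t)) = 0 := by
  rw [ZMod.intCast_zmod_eq_zero_iff_dvd, ZMod.intCast_zmod_eq_zero_iff_dvd]
  push_cast
  rw [pow_add, mul_comm]
  exact mul_dvd_mul_iff_left (pow_ne_zero 2 (by exact_mod_cast hpf.out.ne_zero))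

lemma B_step_nonprim (t : ℕ) (e : ℤ) :
    Nat.card {x : ZMod (p ^ (t + 2)) × ZMod (p ^ (t + 2)) × ZMod (p ^ (t + 2)) //
      (x.2.1 * x.2.2 = x.1 ^ 2 + (p ^ 2 * e : ℤ) ∧ ¬ IsUnit x.2.1) ∧ ¬ IsUnit x.2.2} =
      p ^ 3 * B p t e := by
  have : NeZero (p ^ t) := ⟨pow_ne_zero _ hpf.out.ne_zero⟩
  have : NeZero (p ^ (t + 2)) := ⟨pow_ne_zero _ hpf.out.ne_zero⟩
  have h0 : 0 < p := hpf.out.pos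
  have ht : 1 ≤ t + 2 := by omega
  -- multiplication by p
  let f : ZMod (p ^ (t + 2)) × ZMod (p ^ (t + 2)) × ZMod (p ^ (t + 2)) →+ ZMod (p ^ (t + 2)) × ZMod (p ^ (t + 2)) × ZMod (p ^ (t + 2)) := AddMonoidHom.mulLeft ((p : ZMod (p ^ (t + 2))), (p : ZMod (p ^ (t + 2))), (p : ZMod (p ^ (t + 2))))
  let c := (ZMod.castHom (show p ^ t ∣ p ^ (t + 2) from pow_dvd_pow _ (by omega)) (ZMod (p ^ t)))
  let g : ZMod (p ^ (t + 2)) × ZMod (p ^ (t + 2)) × ZMod (p ^ (t + 2)) →+ ZMod (p ^ t) × ZMod (p ^ t) × ZMod (p ^ t) :=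
    AddMonoidHom.prodMap c.toAddMonoidHom (AddMonoidHom.prodMap c.toAddMonoidHom c.toAddMonoidHom)
  have hcs : Function.Surjective c := ZMod.castHom_surjective _
  have hgs : Function.Surjective g := by
    rintro ⟨x, y, z⟩
    obtain ⟨x, rfl⟩ := hcs x
    obtain ⟨y, rfl⟩ := hcs y
    obtain ⟨z, rfl⟩ := hcs z
    exact ⟨(x, y, z), rfl⟩
  -- kernel of g
  have hg1 := card_preimage_s6 g (fun _ => True) (fun h _ => hgs h)
  have hf1 := card_preimage_s6 f (fun x => ¬ IsUnit x.1 ∧ ¬ IsUnit x.2.1 ∧ ¬ IsUnit x.2.2) (by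
    rintro ⟨x, y, z⟩ ⟨hx, hy, hz⟩
    obtain ⟨x', hx'⟩ := (not_isUnit_iff p _ ht x).1 hx
    obtain ⟨y', hy'⟩ := (not_isUnit_iff p _ ht y).1 hy
    obtain ⟨z', hz'⟩ := (not_isUnit_iff p _ ht z).1 hz
    exact ⟨(x', y', z'), by simp [f, hx', hy', hz']⟩)
  have hT : ∀ (α : Type) (P : α → Prop), (∀ x, P x) → Nat.card {x : α // P x} = Nat.card α :=
    fun α P h => Nat.card_congr (Equiv.subtypeUnivEquiv h)
  rw [hT _ _ (fun _ => trivial), hT _ _ (fun _ => trivial)] at hg1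
  rw [hT _ _ (by
    rintro ⟨x, y, z⟩
    exact ⟨(not_isUnit_iff p _ ht _).2 ⟨x, rfl⟩, (not_isUnit_iff p _ ht _).2 ⟨y, rfl⟩,
      (not_isUnit_iff p _ ht _).2 ⟨z, rfl⟩⟩)] at hf1
  have hV3 : Nat.card {x : ZMod (p ^ (t + 2)) × ZMod (p ^ (t + 2)) × ZMod (p ^ (t + 2)) // ¬ IsUnit x.1 ∧ ¬ IsUnit x.2.1 ∧ ¬ IsUnit x.2.2}
      = p ^ (t + 1) * (p ^ (t + 1) * p ^ (t + 1)) := by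
    have : p ^ (t + 1) = Nat.card {x : ZMod (p ^ (t + 2)) // ¬ IsUnit x} := (card_V p (t + 2) ht).symm
    rw [this, ← Nat.card_prod, ← Nat.card_prod]
    exact Nat.card_congr
      { toFun := fun x => (⟨x.1.1, x.2.1⟩, ⟨x.1.2.1, x.2.2.1⟩, ⟨x.1.2.2, x.2.2.2⟩)
        invFun := fun q => ⟨(q.1.1, q.2.1.1, q.2.2.1), q.1.2, q.2.1.2, q.2.2.2⟩
        left_inv := fun x => rfl
        right_inv := fun q => rfl }
  have hR3 : Nat.card (ZMod (p ^ (t + 2)) × ZMod (p ^ (t + 2)) × ZMod (p ^ (t + 2))) = p ^ (t + 2) * (p ^ (t + 2) * p ^ (t + 2)) := by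
    simp [Nat.card_prod]
  rw [hV3, hR3] at hf1
  rw [hR3] at hg1
  simp only [Nat.card_prod, Nat.card_zmod] at hg1
  have hkf : Nat.card f.ker = p ^ 3 := by
    refine Nat.eq_of_mul_eq_mul_right (show 0 < p ^ (t + 1) * (p ^ (t + 1) * p ^ (t + 1)) by
      positivity) ?_
    rw [← hf1]; ring
  have hkg : Nat.card g.ker = p ^ 6 := by
    refine Nat.eq_of_mul_eq_mul_right (show 0 < p ^ t * (p ^ t * p ^ t) by
      positivity) ?_
    rw [← hg1]; ring
  -- main counts
  have hnp : ∀ s u v : ZMod (p ^ (t + 2)), u * v = s ^ 2 + (p ^ 2 * e : ℤ) → ¬ IsUnit u → ¬ IsUnit s := by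
    intro s u v h hu hs
    obtain ⟨u, rfl⟩ := (not_isUnit_iff p _ ht u).1 hu
    refine (not_isUnit_iff p _ ht _).2 ⟨u * v - p * e, ?_⟩ (hs.pow 2)
    push_cast at h
    linear_combination -h
  have hg2 := card_preimage_s6 g (fun x => x.2.1 * x.2.2 = x.1 ^ 2 + e) (fun h _ => hgs h)
  have hf2 := card_preimage_s6 f (fun x => (x.2.1 * x.2.2 = x.1 ^ 2 + (p ^ 2 * e : ℤ) ∧
      ¬ IsUnit x.2.1) ∧ ¬ IsUnit x.2.2) (by
    rintro ⟨x, y, z⟩ ⟨⟨h, hy⟩, hz⟩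
    obtain ⟨x', hx'⟩ := (not_isUnit_iff p _ ht x).1 (hnp _ _ _ h hy)
    obtain ⟨y', hy'⟩ := (not_isUnit_iff p _ ht y).1 hy
    obtain ⟨z', hz'⟩ := (not_isUnit_iff p _ ht z).1 hz
    exact ⟨(x', y', z'), by simp [f, hx', hy', hz']⟩)
  have hsame : ∀ x : ZMod (p ^ (t + 2)) × ZMod (p ^ (t + 2)) × ZMod (p ^ (t + 2)), ((f x).2.1 * (f x).2.2 = (f x).1 ^ 2 + (p ^ 2 * e : ℤ) ∧
      ¬ IsUnit (f x).2.1) ∧ ¬ IsUnit (f x).2.2 ↔ (g x).2.1 * (g x).2.2 = (g x).1 ^ 2 + e := by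
    rintro ⟨x, y, z⟩
    have hy : ¬ IsUnit (f (x, y, z)).2.1 := (not_isUnit_iff p _ ht _).2 ⟨y, rfl⟩
    have hz : ¬ IsUnit (f (x, y, z)).2.2 := (not_isUnit_iff p _ ht _).2 ⟨z, rfl⟩
    simp only [hy, hz, not_false_eq_true, and_true]
    obtain ⟨x, rfl⟩ := ZMod.intCast_surjective x
    obtain ⟨y, rfl⟩ := ZMod.intCast_surjective y
    obtain ⟨z, rfl⟩ := ZMod.intCast_surjective z
    have key := sq_mul_eq_zero p t (y * z - x ^ 2 - e)
    have e1 : (f ((x : ZMod (p ^ (t + 2))), (y : ZMod (p ^ (t + 2))), (z : ZMod (p ^ (t + 2))))) = ((p : ZMod (p ^ (t + 2))) * (x : ZMod (p ^ (t + 2))), (p : ZMod (p ^ (t + 2))) * (y : ZMod (p ^ (t + 2))), (p : ZMod (p ^ (t + 2))) * (z : ZMod (p ^ (t + 2)))) := rfl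
    have e2 : (g ((x : ZMod (p ^ (t + 2))), (y : ZMod (p ^ (t + 2))), (z : ZMod (p ^ (t + 2))))) = ((x : ZMod (p ^ t)), (y : ZMod (p ^ t)),
      (z : ZMod (p ^ t))) := by
      change (c (x : ZMod (p ^ (t + 2))), c (y : ZMod (p ^ (t + 2))), c (z : ZMod (p ^ (t + 2)))) = _
      simp only [map_intCast]
    rw [e1, e2]
    simp only
    push_cast at key ⊢
    constructor
    · intro h
      have := key.1 (by linear_combination h)
      linear_combination this
    · intro h
      have := key.2 (by linear_combination h)
      linear_combination this
  rw [Nat.card_congr (Equiv.subtypeEquivRight hsame), hg2, hkf, hkg] at hf2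
  refine Nat.eq_of_mul_eq_mul_left (show 0 < p ^ 3 by positivity) ?_
  rw [← hf2, B]
  ring

lemma B_step (t : ℕ) (e : ℤ) :
    (B p (t + 2) (p ^ 2 * e) : ℤ) = p ^ (2 * t + 4) - p ^ (2 * t + 2) + p ^ 3 * B p t e := by
  have : NeZero (p ^ (t + 2)) := ⟨pow_ne_zero _ hpf.out.ne_zero⟩
  conv_lhs => rw [B]
  rw [card_split _ (fun x => IsUnit x.2.1), card_Bunit p _ (by omega),
    card_split (fun x : ZMod (p ^ (t + 2)) × ZMod (p ^ (t + 2)) × ZMod (p ^ (t + 2)) =>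
      x.2.1 * x.2.2 = x.1 ^ 2 + (p ^ 2 * e : ℤ) ∧ ¬ IsUnit x.2.1) (fun x => IsUnit x.2.2),
    B_step_prim2 p _ (by omega), B_step_nonprim]
  push_cast [Nat.cast_sub hpf.out.one_le]
  ring

lemma B_main (hp : 3 ≤ p) (c : ℕ) : ∀ (t : ℕ) (_ : 2 * c + 1 ≤ t) (e : ℤ) (_ : ¬ (p : ℤ) ∣ e),
    (B p t (p ^ (2 * c) * e) : ℤ) * p ^ (c + 1) =
      (p : ℤ) ^ (2 * t) * ((p + 1) * p ^ c + legendreSym p (-e) - 1) := by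
  induction c with
  | zero =>
    intro t ht e he
    have := B_zero p hp t (by omega) e he
    simp only [mul_zero, pow_zero, one_mul, zero_add, pow_one, mul_one]
    rw [this]; ring
  | succ c ih =>
    intro t ht e he
    obtain ⟨t, rfl⟩ : ∃ s, t = s + 2 := ⟨t - 2, by omega⟩
    have h := ih t (by omega) e he
    rw [show (p : ℤ) ^ (2 * (c + 1)) * e = p ^ 2 * (p ^ (2 * c) * e) by ring, B_step]
    linear_combination (p : ℤ) ^ 4 * h

/-- `-1` is a sum of two squares -/
lemma exists_ab (hp : 3 ≤ p) (t : ℕ) : ∃ α β : ZMod (p ^ t), α ^ 2 + β ^ 2 = -1 := by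
  obtain ⟨a, b, hab⟩ := ZMod.sq_add_sq p (-1)
  wlog ha : a ≠ 0 generalizing a b
  · push Not at ha
    refine this b a (by rw [← hab]; ring) ?_
    rintro rfl
    rw [ha] at hab
    have : Fact (1 < p) := ⟨by omega⟩
    simp at hab
  obtain ⟨a, rfl⟩ := ZMod.intCast_surjective a
  obtain ⟨b, rfl⟩ := ZMod.intCast_surjective b
  have hd : (p : ℤ) ∣ a ^ 2 - (-1 - b ^ 2) := by
    rw [← ZMod.intCast_zmod_eq_zero_iff_dvd]; push_cast
    linear_combination hab
  have hz : ¬ (p : ℤ) ∣ (-1 - b ^ 2) := by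
    intro h
    have h2 := dvd_add hd h
    rw [sub_add_cancel] at h2
    have h3 := (Nat.prime_iff_prime_int.mp hpf.out).dvd_of_dvd_pow h2
    rw [← ZMod.intCast_zmod_eq_zero_iff_dvd] at h3
    exact ha h3
  obtain ⟨s, hs⟩ := hensel_sq p hp _ a hz hd t
  refine ⟨s, b, ?_⟩
  have : ((s ^ 2 - (-1 - b ^ 2) : ℤ) : ZMod (p ^ t)) = 0 := by
    rw [ZMod.intCast_zmod_eq_zero_iff_dvd]; exact_mod_cast hs
  push_cast at this
  linear_combination this

variable {p}
section alg
variable {R : Type*} [CommRing R]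

lemma card_four (α β i2 : R) (hab : α ^ 2 + β ^ 2 = -1) (h2 : 2 * i2 = 1) (m : R) :
    Nat.card {x : R × R × R × R // x.1 ^ 2 + x.2.1 ^ 2 + x.2.2.1 ^ 2 + x.2.2.2 ^ 2 = m} =
    Nat.card {x : R × R × R × R // x.1 * x.2.1 + x.2.2.1 * x.2.2.2 = m} := by
  refine Nat.card_congr
    { toFun := fun ⟨(x, y, z, w), h⟩ => ⟨(x - (α * z + β * w), x + (α * z + β * w),
        y - (-β * z + α * w), y + (-β * z + α * w)), ?_⟩
      invFun := fun ⟨(x, y, z, w), h⟩ => ⟨(i2 * (x + y), i2 * (z + w),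
        -(α * (i2 * (y - x)) - β * (i2 * (w - z))), -(β * (i2 * (y - x)) + α * (i2 * (w - z)))), ?_⟩
      left_inv := ?_
      right_inv := ?_ }
  · simp only at h ⊢
    linear_combination h - (z ^ 2 + w ^ 2) * hab
  · simp only at h ⊢
    linear_combination h + (i2 ^ 2 * (y - x) ^ 2 + i2 ^ 2 * (w - z) ^ 2) * hab
      + (2 * i2 + 1) * (x * y + z * w) * h2
  · rintro ⟨⟨x, y, z, w⟩, h⟩
    simp only [Subtype.mk.injEq, Prod.mk.injEq]
    refine ⟨?_, ?_, ?_, ?_⟩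
    · linear_combination x * h2
    · linear_combination y * h2
    · linear_combination -2 * i2 * z * hab + z * h2
    · linear_combination -2 * i2 * w * hab + w * h2
  · rintro ⟨⟨x, y, z, w⟩, h⟩
    simp only [Subtype.mk.injEq, Prod.mk.injEq]
    refine ⟨?_, ?_, ?_, ?_⟩
    · linear_combination i2 * (y - x) * hab + x * h2
    · linear_combination -i2 * (y - x) * hab + y * h2
    · linear_combination i2 * (w - z) * hab + z * h2
    · linear_combination -i2 * (w - z) * hab + w * h2

lemma card_three (α β i2 : R) (hab : α ^ 2 + β ^ 2 = -1) (h2 : 2 * i2 = 1) (m : R) :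
    Nat.card {x : R × R × R // x.1 ^ 2 + x.2.1 ^ 2 + x.2.2 ^ 2 = m} =
    Nat.card {x : R × R × R // x.2.1 * x.2.2 = x.1 ^ 2 + m} := by
  refine Nat.card_congr
    { toFun := fun ⟨(x, z, w), h⟩ => ⟨((-β * z + α * w), x - (α * z + β * w),
        x + (α * z + β * w)), ?_⟩
      invFun := fun ⟨(s, u, v), h⟩ => ⟨(i2 * (u + v),
        -(α * (i2 * (v - u)) - β * s), -(β * (i2 * (v - u)) + α * s)), ?_⟩
      left_inv := ?_
      right_inv := ?_ }
  · simp only at h ⊢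
    linear_combination h - (z ^ 2 + w ^ 2) * hab
  · simp only at h ⊢
    linear_combination h + (i2 ^ 2 * (v - u) ^ 2 + s ^ 2) * hab
      + (2 * i2 + 1) * (u * v) * h2
  · rintro ⟨⟨x, z, w⟩, h⟩
    simp only [Subtype.mk.injEq, Prod.mk.injEq]
    refine ⟨?_, ?_, ?_⟩
    · linear_combination x * h2
    · linear_combination -z * hab - α * (α * z + β * w) * h2
    · linear_combination -w * hab - β * (α * z + β * w) * h2
  · rintro ⟨⟨s, u, v⟩, h⟩
    simp only [Subtype.mk.injEq, Prod.mk.injEq]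
    refine ⟨?_, ?_, ?_⟩
    · linear_combination -s * hab
    · linear_combination i2 * (v - u) * hab + u * h2
    · linear_combination -i2 * (v - u) * hab + v * h2
end alg

/-- The quaternion trick. -/
lemma card_quat {R : Type*} [CommRing R] (m mi d : R) (hmi : m * mi = 1) :
    Nat.card {X : Matrix (Fin 2) (Fin 4) R // X * Xᵀ = !![m, 0; 0, d]} =
    Nat.card {x : R × R × R × R // x.1 ^ 2 + x.2.1 ^ 2 + x.2.2.1 ^ 2 + x.2.2.2 ^ 2 = m} *
    Nat.card {x : R × R × R // x.1 ^ 2 + x.2.1 ^ 2 + x.2.2 ^ 2 = m * d} := by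
  rw [← Nat.card_prod]
  have hX : ∀ X : Matrix (Fin 2) (Fin 4) R, X * Xᵀ = !![m, 0; 0, d] ↔
      (X 0 0 ^ 2 + X 0 1 ^ 2 + X 0 2 ^ 2 + X 0 3 ^ 2 = m ∧
       X 0 0 * X 1 0 + X 0 1 * X 1 1 + X 0 2 * X 1 2 + X 0 3 * X 1 3 = 0 ∧
       X 1 0 ^ 2 + X 1 1 ^ 2 + X 1 2 ^ 2 + X 1 3 ^ 2 = d) := by
    intro X
    rw [← Matrix.ext_iff]
    simp only [Fin.forall_fin_two, Matrix.mul_apply, Fin.sum_univ_four, Matrix.transpose_apply,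
      Matrix.of_apply, Matrix.cons_val_zero, Matrix.cons_val_one, Matrix.cons_val_fin_one]
    constructor
    · rintro ⟨⟨h1, h2⟩, h3, h4⟩
      exact ⟨by rw [← h1]; ring, h2, by rw [← h4]; ring⟩
    · rintro ⟨h1, h2, h3⟩
      exact ⟨⟨by rw [← h1]; ring, h2⟩, by rw [← h2]; ring, by rw [← h3]; ring⟩
  rw [Nat.card_congr (Equiv.subtypeEquivRight hX)]
  refine Nat.card_congr
    { toFun := fun X => (⟨(X.1 0 0, X.1 0 1, X.1 0 2, X.1 0 3), X.2.1⟩,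
        ⟨(X.1 0 0 * X.1 1 1 - X.1 0 1 * X.1 1 0 - X.1 0 2 * X.1 1 3 + X.1 0 3 * X.1 1 2,
          X.1 0 0 * X.1 1 2 - X.1 0 2 * X.1 1 0 - X.1 0 3 * X.1 1 1 + X.1 0 1 * X.1 1 3,
          X.1 0 0 * X.1 1 3 - X.1 0 3 * X.1 1 0 - X.1 0 1 * X.1 1 2 + X.1 0 2 * X.1 1 1), ?_⟩)
      invFun := fun q =>
        ⟨!![q.1.1.1, q.1.1.2.1, q.1.1.2.2.1, q.1.1.2.2.2;
          mi * (- q.1.1.2.1 * q.2.1.1 - q.1.1.2.2.1 * q.2.1.2.1 - q.1.1.2.2.2 * q.2.1.2.2),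
          mi * (q.1.1.1 * q.2.1.1 + q.1.1.2.2.1 * q.2.1.2.2 - q.1.1.2.2.2 * q.2.1.2.1),
          mi * (q.1.1.1 * q.2.1.2.1 + q.1.1.2.2.2 * q.2.1.1 - q.1.1.2.1 * q.2.1.2.2),
          mi * (q.1.1.1 * q.2.1.2.2 + q.1.1.2.1 * q.2.1.2.1 - q.1.1.2.2.1 * q.2.1.1)], ?_⟩
      left_inv := ?_
      right_inv := ?_ }
  · obtain ⟨X, h1, h2, h3⟩ := X
    simp only
    rw [← h1, ← h3]
    linear_combination (-(X 0 0 * X 1 0 + X 0 1 * X 1 1 + X 0 2 * X 1 2 + X 0 3 * X 1 3)) * h2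
  · obtain ⟨⟨⟨x0, x1, x2, x3⟩, h1⟩, ⟨⟨w1, w2, w3⟩, h3⟩⟩ := q
    simp only at h1 h3
    simp [Matrix.cons_val_zero, Matrix.cons_val_one]
    refine ⟨h1, by ring, ?_⟩
    have : d = mi ^ 2 * ((x0 ^ 2 + x1 ^ 2 + x2 ^ 2 + x3 ^ 2) * (w1 ^ 2 + w2 ^ 2 + w3 ^ 2)) := by
      rw [h1, h3]; linear_combination (-d * (m * mi + 1)) * hmi
    rw [this]; ring
  · rintro ⟨X, h1, h2, h3⟩
    simp only [Subtype.mk.injEq]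
    ext i j
    fin_cases i <;> fin_cases j <;> simp
    · linear_combination mi * X 1 0 * h1 - mi * X 0 0 * h2 + X 1 0 * hmi
    · linear_combination mi * X 1 1 * h1 - mi * X 0 1 * h2 + X 1 1 * hmi
    · linear_combination mi * X 1 2 * h1 - mi * X 0 2 * h2 + X 1 2 * hmi
    · linear_combination mi * X 1 3 * h1 - mi * X 0 3 * h2 + X 1 3 * hmi
  · rintro ⟨⟨⟨x0, x1, x2, x3⟩, h1⟩, ⟨⟨w1, w2, w3⟩, h3⟩⟩
    simp only at h1 h3
    simp
    refine ⟨?_, ?_, ?_⟩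
    · linear_combination mi * w1 * h1 + w1 * hmi
    · linear_combination mi * w2 * h1 + w2 * hmi
    · linear_combination mi * w3 * h1 + w3 * hmi

end LD

/-- Ramified local density, even case: let `n ≥ 3` be odd, `p ≥ 3` prime with
`p ∣ n² − 4`, write `n + 2 = m p^a`, `n − 2 = k p^b` with `p ∤ mk` and `a ≤ b`.
If `a + b` is even, then for all sufficiently large `t` the number of `2 × 4`
matrices `X` over `ℤ/p^tℤ` with `X Xᵀ = Gₙ = diag(n+2, n−2)` equals
`p^{5t} (p+1) ((p^{a+1} − 1)(χ_p(−mk) − 1) + (a+1)(p² − 1) p^{(a+b)/2}) / p^{3+(a+b)/2}`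
(stated here with the denominator cleared). -/
theorem local_density_ramified_even (n : ℤ) (hodd : Odd n) (hn : 3 ≤ n)
    (p : ℕ) [Fact p.Prime] (hp : 3 ≤ p) (hpn : (p : ℤ) ∣ n ^ 2 - 4)
    (a b : ℕ) (m k : ℤ)
    (hm : n + 2 = m * (p : ℤ) ^ a) (hk : n - 2 = k * (p : ℤ) ^ b)
    (hpm : ¬ (p : ℤ) ∣ m) (hpk : ¬ (p : ℤ) ∣ k)
    (hab : a ≤ b) (hev : Even (a + b)) :
    ∃ T : ℕ, 1 ≤ T ∧ ∀ t : ℕ, T ≤ t →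
      (Nat.card {X : Matrix (Fin 2) (Fin 4) (ZMod (p ^ t)) //
          X * Xᵀ = !![(n : ZMod (p ^ t)) + 2, 0; 0, (n : ZMod (p ^ t)) - 2]} : ℤ)
          * (p : ℤ) ^ (3 + (a + b) / 2)
        = (p : ℤ) ^ (5 * t) * ((p : ℤ) + 1) *
            (((p : ℤ) ^ (a + 1) - 1) * (legendreSym p (-(m * k)) - 1)
              + ((a : ℤ) + 1) * ((p : ℤ) ^ 2 - 1) * (p : ℤ) ^ ((a + b) / 2)) := by
  have hP := Nat.prime_iff_prime_int.mp (Fact.out : p.Prime)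
  have h4 : ¬ (p : ℤ) ∣ 4 := by
    intro h
    have h2 : (p : ℤ) ∣ 2 := hP.dvd_of_dvd_pow (n := 2) (by norm_num; exact h)
    have := Int.le_of_dvd (by norm_num) h2
    omega
  have ha : a = 0 := by
    by_contra ha
    apply h4
    have h1 : (p : ℤ) ∣ n + 2 := hm ▸ dvd_mul_of_dvd_right (dvd_pow_self _ ha) _
    have h2 : (p : ℤ) ∣ n - 2 := hk ▸ dvd_mul_of_dvd_right (dvd_pow_self _ (by omega)) _
    have := dvd_sub h1 h2
    ring_nf at this
    exact this
  subst ha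
  simp only [zero_add, pow_zero, mul_one] at *
  obtain ⟨c, hc⟩ := hev
  obtain rfl : b = 2 * c := by omega
  refine ⟨2 * c + 1, by omega, fun t ht => ?_⟩
  have hmu : IsUnit (m : ZMod (p ^ t)) := (LD.isUnit_int p t (by omega) m).2 hpm
  have h2u : IsUnit ((2 : ℤ) : ZMod (p ^ t)) := (LD.isUnit_int p t (by omega) 2).2 (fun h => by
    have := Int.le_of_dvd (by norm_num) h; omega)
  have h2i := Ring.mul_inverse_cancel _ h2u
  obtain ⟨α, β, hαβ⟩ := LD.exists_ab p hp t
  have e1 : (n : ZMod (p ^ t)) + 2 = m := by rw [← hm]; push_cast; rfl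
  have e2 : (n : ZMod (p ^ t)) - 2 = ((k * p ^ (2 * c) : ℤ) : ZMod (p ^ t)) := by
    rw [← hk]; push_cast; rfl
  rw [e1, e2, LD.card_quat _ _ _ (Ring.mul_inverse_cancel _ hmu),
    LD.card_four α β _ hαβ (by exact_mod_cast h2i), LD.card_three α β _ hαβ (by exact_mod_cast h2i),
    LD.card_A p t (by omega) _ hmu]
  have hB := LD.B_main p hp c t ht (m * k) (fun h => by
    rcases hP.dvd_or_dvd h with h | h
    · exact hpm h
    · exact hpk h)
  have e3 : (m : ZMod (p ^ t)) * ((k * p ^ (2 * c) : ℤ) : ZMod (p ^ t))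
      = ((p ^ (2 * c) * (m * k) : ℤ) : ZMod (p ^ t)) := by push_cast; ring
  rw [e3]
  change ((_ * LD.B p t (p ^ (2 * c) * (m * k)) : ℕ) : ℤ) * _ = _
  rw [show 2 * c / 2 = c by omega]
  obtain ⟨s, rfl⟩ : ∃ s, t = s + 1 := ⟨t - 1, by omega⟩
  push_cast [Nat.cast_sub (Fact.out : p.Prime).one_le]
  linear_combination ((p : ℤ) ^ (3 * (s + 1)) * (p ^ 2 - 1)) * hB
end

section
/- Let n ≥ 3 be an odd integer and let p ≥ 3 be a prime dividing n² − 4. Let a be the p-adic valuation of n + 2 and b the p-adic valuation of n − 2, with m = (n + 2)/p^a and k = (n − 2)/p^b (so p ∤ mk), and assume a ≤ b (otherwise exchange the roles of (a, m) and (b, k)). If a + b is odd, then there exists T ≥ 1 such that for every t ≥ T, the number of 2×4 matrices X over ℤ/p^tℤ satisfying X·Xᵀ = G_n (mod p^t) equals p^{5t} · (p + 1)² · ((a + 1)(p − 1) p^{(a+b+1)/2} − (p^{a+1} − 1)) / p^{3 + (a+b+1)/2}. -/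
open Matrix

lemma aux_card_fib {A B : Type*} [Finite A] [Finite B] (P : A → Prop) (Q : A → B → Prop) (c : ℕ)
    (h : ∀ a, P a → Nat.card {b // Q a b} = c) :
    Nat.card {x : A × B // P x.1 ∧ Q x.1 x.2} = Nat.card {a // P a} * c := by
  classical
  have e : {x : A × B // P x.1 ∧ Q x.1 x.2} ≃ Σ a : {a // P a}, {b // Q a.1 b} :=
    { toFun := fun x => ⟨⟨x.1.1, x.2.1⟩, ⟨x.1.2, x.2.2⟩⟩
      invFun := fun y => ⟨(y.1.1, y.2.1), y.1.2, y.2.2⟩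
      left_inv := fun x => rfl
      right_inv := fun y => rfl }
  have := Fintype.ofFinite {a // P a}
  rw [Nat.card_congr e, Nat.card_sigma, Finset.sum_congr rfl (fun a _ => h a.1 a.2)]
  simp [Nat.card_eq_fintype_card]

lemma aux_card_split {A : Type*} [Finite A] (P Q : A → Prop) :
    Nat.card {x // P x} = Nat.card {x // P x ∧ Q x} + Nat.card {x // P x ∧ ¬ Q x} := by
  classical
  have := Fintype.ofFinite A
  simp only [Nat.card_eq_fintype_card, Fintype.card_subtype]
  rw [← Finset.card_filter_add_card_filter_not (s := Finset.univ.filter P) Q]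
  simp [Finset.filter_filter]

section
variable {p : ℕ} [Fact p.Prime] {t : ℕ}

lemma aux_dvd_int {i : ℕ} (hi : i ≤ t) (z : ℤ) :
    ((p : ZMod (p ^ t)) ^ i ∣ (z : ZMod (p ^ t))) ↔ (p : ℤ) ^ i ∣ z := by
  constructor
  · rintro ⟨c, hc⟩
    obtain ⟨c, rfl⟩ := ZMod.intCast_surjective c
    have : ((z - p ^ i * c : ℤ) : ZMod (p ^ t)) = 0 := by push_cast; rw [hc]; ring
    rw [ZMod.intCast_zmod_eq_zero_iff_dvd] at this
    have h2 : (p : ℤ) ^ i ∣ z - p ^ i * c :=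
      (pow_dvd_pow _ hi).trans (by exact_mod_cast this)
    have := dvd_add h2 (Dvd.intro c rfl)
    simpa using this
  · rintro ⟨c, rfl⟩
    exact ⟨c, by push_cast; rfl⟩

lemma aux_card_dvd {i : ℕ} (hi : i ≤ t) :
    Nat.card {x : ZMod (p ^ t) // (p : ZMod (p ^ t)) ^ i ∣ x} = p ^ (t - i) := by
  have hp := (Fact.out : p.Prime)
  have e : {x : ZMod (p ^ t) // (p : ZMod (p ^ t)) ^ i ∣ x} ≃
      AddSubgroup.zmultiples ((p ^ i : ℕ) : ZMod (p ^ t)) := by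
    refine Equiv.subtypeEquivRight fun x => ?_
    rw [AddSubgroup.mem_zmultiples_iff]
    constructor
    · rintro ⟨c, rfl⟩
      obtain ⟨c, rfl⟩ := ZMod.intCast_surjective c
      exact ⟨c, by simp [mul_comm]⟩
    · rintro ⟨c, rfl⟩
      exact ⟨c, by simp [mul_comm]⟩
  rw [Nat.card_congr e, Nat.card_zmultiples, ZMod.addOrderOf_coe _ (pow_pos hp.pos t).ne',
    Nat.gcd_eq_right (pow_dvd_pow _ hi), Nat.pow_div hi hp.pos]

lemma aux_unit_iff (ht : 1 ≤ t) (x : ZMod (p ^ t)) : IsUnit x ↔ ¬ (p : ZMod (p ^ t)) ∣ x := by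
  have hp := (Fact.out : p.Prime)
  obtain ⟨z, rfl⟩ := ZMod.intCast_surjective x
  have h1 := aux_dvd_int (p := p) ht z
  rw [pow_one, pow_one] at h1
  rw [h1]
  constructor
  · intro hu hd
    rw [← h1] at hd
    have hpu := isUnit_of_dvd_unit hd hu
    rw [ZMod.isUnit_iff_coprime] at hpu
    rw [Nat.coprime_pow_right_iff (by omega)] at hpu
    simp at hpu
    exact hp.one_lt.ne' hpu
  · intro hd
    have hc : IsCoprime (p : ℤ) z := (Nat.prime_iff_prime_int.mp hp).coprime_iff_not_dvd.mpr hd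
    obtain ⟨u, v, huv⟩ := hc.pow_left (m := t)
    refine IsUnit.of_mul_eq_one (v : ZMod (p ^ t)) ?_
    have := congrArg (Int.cast : ℤ → ZMod (p ^ t)) huv
    have h0 : ((p : ZMod (p ^ t)) ^ t) = 0 := by
      have := ZMod.natCast_self (p ^ t); push_cast at this; exact this
    push_cast at this
    rw [h0] at this
    linear_combination this

lemma aux_ann {i : ℕ} (hi : i ≤ t) (x : ZMod (p ^ t)) :
    (p : ZMod (p ^ t)) ^ i * x = 0 ↔ (p : ZMod (p ^ t)) ^ (t - i) ∣ x := by
  have hp := (Fact.out : p.Prime)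
  obtain ⟨z, rfl⟩ := ZMod.intCast_surjective x
  rw [aux_dvd_int (by omega)]
  have : (p : ZMod (p ^ t)) ^ i * (z : ZMod (p ^ t)) = ((p ^ i * z : ℤ) : ZMod (p ^ t)) := by
    push_cast; rfl
  rw [this, ZMod.intCast_zmod_eq_zero_iff_dvd]
  push_cast
  have h3 : (p : ℤ) ^ t = p ^ i * p ^ (t - i) := by rw [← pow_add]; congr 1; omega
  rw [h3]
  exact mul_dvd_mul_iff_left (pow_ne_zero _ (by exact_mod_cast hp.ne_zero))

lemma aux_fiber {j : ℕ} (hj : j < t) (β c : ZMod (p ^ t)) (h1 : (p : ZMod (p ^ t)) ^ j ∣ β)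
    (h2 : ¬ (p : ZMod (p ^ t)) ^ (j + 1) ∣ β) (hc : (p : ZMod (p ^ t)) ^ j ∣ c) :
    Nat.card {γ // β * γ = c} = p ^ j := by
  obtain ⟨u, rfl⟩ := h1
  obtain ⟨d, rfl⟩ := hc
  have hu : IsUnit u := by
    rw [aux_unit_iff (by omega)]
    rintro ⟨e, rfl⟩
    exact h2 ⟨e, by ring⟩
  obtain ⟨v, hv⟩ := hu.exists_right_inv
  have := aux_card_dvd (p := p) (t := t) (i := t - j) (by omega)
  rw [show t - (t - j) = j by omega] at this
  rw [← this]
  refine Nat.card_congr ((Equiv.subRight (v * d)).subtypeEquiv fun γ => ?_)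
  rw [← aux_ann hj.le]
  simp only [Equiv.subRight_apply]
  constructor
  · intro h
    linear_combination v * h - (p : ZMod (p ^ t)) ^ j * γ * hv
  · intro h
    linear_combination u * h + (p : ZMod (p ^ t)) ^ j * d * hv

lemma aux_sq_dvd (j : ℕ) (z : ℤ) : (p : ℤ) ^ j ∣ z ^ 2 ↔ (p : ℤ) ^ ((j + 1) / 2) ∣ z := by
  have hp := Nat.prime_iff_prime_int.mp (Fact.out : p.Prime)
  rw [pow_dvd_iff_le_emultiplicity, pow_dvd_iff_le_emultiplicity, emultiplicity_pow hp]
  cases h : emultiplicity (p : ℤ) z with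
  | top => simp
  | coe n => norm_cast; omega

lemma aux_card_sq {j : ℕ} (hj : j ≤ t) :
    Nat.card {x : ZMod (p ^ t) // (p : ZMod (p ^ t)) ^ j ∣ x ^ 2} = p ^ (t - (j + 1) / 2) := by
  rw [← aux_card_dvd (p := p) (t := t) (i := (j + 1) / 2) (by omega)]
  refine Nat.card_congr (Equiv.subtypeEquivRight fun x => ?_)
  obtain ⟨z, rfl⟩ := ZMod.intCast_surjective x
  have := aux_sq_dvd (p := p) j z
  rw [← aux_dvd_int (t := t) hj, ← aux_dvd_int (t := t) (by omega)] at this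
  push_cast at this
  exact this

lemma aux_card_exact {j : ℕ} (hj : j < t) :
    Nat.card {x : ZMod (p ^ t) // (p : ZMod (p ^ t)) ^ j ∣ x ∧ ¬ (p : ZMod (p ^ t)) ^ (j + 1) ∣ x}
      = p ^ (t - j - 1) * (p - 1) := by
  have h := aux_card_split (fun x : ZMod (p ^ t) => (p : ZMod (p ^ t)) ^ j ∣ x)
    (fun x => (p : ZMod (p ^ t)) ^ (j + 1) ∣ x)
  rw [aux_card_dvd hj.le] at h
  have h2 : Nat.card {x : ZMod (p ^ t) // (p : ZMod (p ^ t)) ^ j ∣ x ∧ (p : ZMod (p ^ t)) ^ (j + 1) ∣ x}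
      = p ^ (t - (j + 1)) := by
    rw [← aux_card_dvd (by omega)]
    exact Nat.card_congr (Equiv.subtypeEquivRight fun x =>
      ⟨fun h => h.2, fun h => ⟨(pow_dvd_pow _ (by omega)).trans h, h⟩⟩)
  rw [h2, show t - j = (t - j - 1) + 1 by omega, show t - (j + 1) = t - j - 1 by omega,
    pow_succ] at h
  rw [Nat.mul_sub, mul_one]
  omega

lemma aux_layer {j : ℕ} (hj : j < t) (w : ZMod (p ^ t)) (hw : (p : ZMod (p ^ t)) ^ j ∣ w) :
    Nat.card {x : (ZMod (p ^ t) × ZMod (p ^ t)) × ZMod (p ^ t) //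
      ((p : ZMod (p ^ t)) ^ j ∣ x.1.2 ∧ ¬ (p : ZMod (p ^ t)) ^ (j + 1) ∣ x.1.2) ∧
        x.1.1 ^ 2 + x.1.2 * x.2 = w} = p ^ (t - (j + 1) / 2) * (p ^ (t - 1) * (p - 1)) := by
  have h1 : Nat.card {x : (ZMod (p ^ t) × ZMod (p ^ t)) × ZMod (p ^ t) //
      ((p : ZMod (p ^ t)) ^ j ∣ x.1.2 ∧ ¬ (p : ZMod (p ^ t)) ^ (j + 1) ∣ x.1.2) ∧
        x.1.1 ^ 2 + x.1.2 * x.2 = w} =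
      Nat.card {x : (ZMod (p ^ t) × ZMod (p ^ t)) × ZMod (p ^ t) //
      ((p : ZMod (p ^ t)) ^ j ∣ x.1.1 ^ 2 ∧ 
      ((p : ZMod (p ^ t)) ^ j ∣ x.1.2 ∧ ¬ (p : ZMod (p ^ t)) ^ (j + 1) ∣ x.1.2)) ∧
        x.1.2 * x.2 = w - x.1.1 ^ 2} := by
    refine Nat.card_congr (Equiv.subtypeEquivRight fun x => ?_)
    constructor
    · rintro ⟨h, h'⟩
      refine ⟨⟨?_, h⟩, by linear_combination h'⟩
      rw [show x.1.1 ^ 2 = w - x.1.2 * x.2 by linear_combination h']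
      exact dvd_sub hw (h.1.mul_right _)
    · rintro ⟨h, h'⟩
      exact ⟨h.2, by linear_combination h'⟩
  rw [h1, aux_card_fib (fun y : ZMod (p ^ t) × ZMod (p ^ t) => (p : ZMod (p ^ t)) ^ j ∣ y.1 ^ 2 ∧ 
      ((p : ZMod (p ^ t)) ^ j ∣ y.2 ∧ ¬ (p : ZMod (p ^ t)) ^ (j + 1) ∣ y.2))
      (fun y γ => y.2 * γ = w - y.1 ^ 2) (p ^ j)
      (fun y hy => aux_fiber hj _ _ hy.2.1 hy.2.2 (dvd_sub hw hy.1)),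
    aux_card_fib (fun α : ZMod (p ^ t) => (p : ZMod (p ^ t)) ^ j ∣ α ^ 2)
      (fun _ β => (p : ZMod (p ^ t)) ^ j ∣ β ∧ ¬ (p : ZMod (p ^ t)) ^ (j + 1) ∣ β) _
      (fun _ _ => aux_card_exact hj), aux_card_sq hj.le]
  rw [show t - 1 = (t - j - 1) + j by omega, pow_add p (t - j - 1) j]
  ring

lemma aux_ternary_aux {J : ℕ} (hJ : J ≤ t) (w : ZMod (p ^ t))
    (hw : ∀ j < J, (p : ZMod (p ^ t)) ^ j ∣ w) :
    Nat.card {x : (ZMod (p ^ t) × ZMod (p ^ t)) × ZMod (p ^ t) // x.1.1 ^ 2 + x.1.2 * x.2 = w} =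
    (∑ j ∈ Finset.range J, p ^ (t - (j + 1) / 2) * (p ^ (t - 1) * (p - 1))) +
    Nat.card {x : (ZMod (p ^ t) × ZMod (p ^ t)) × ZMod (p ^ t) //
      (p : ZMod (p ^ t)) ^ J ∣ x.1.2 ∧ x.1.1 ^ 2 + x.1.2 * x.2 = w} := by
  induction J with
  | zero => simp
  | succ J ih =>
    rw [ih (by omega) (fun j hj => hw j (by omega)), Finset.sum_range_succ, add_assoc]
    congr 1
    rw [← aux_layer (by omega) w (hw J (by omega)), aux_card_split _
      (fun x => (p : ZMod (p ^ t)) ^ (J + 1) ∣ x.1.2), add_comm]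
    congr 1
    · exact Nat.card_congr (Equiv.subtypeEquivRight fun x => by tauto)
    · exact Nat.card_congr (Equiv.subtypeEquivRight fun x => 
        ⟨fun h => ⟨h.2, h.1.2⟩, fun h => ⟨⟨(pow_dvd_pow _ (by omega)).trans h.1, h.2⟩, h.1⟩⟩)

lemma aux_sum (s : ℕ) (hs : s ≤ t) :
    ((p : ℤ) - 1) * (∑ j ∈ Finset.range (2 * s), (p : ℤ) ^ (t - (j + 1) / 2)) =
      (p + 1) * (p ^ t - p ^ (t - s)) := by
  induction s with
  | zero => simp
  | succ s ih =>
    rw [show 2 * (s + 1) = 2 * s + 1 + 1 by ring, Finset.sum_range_succ, Finset.sum_range_succ,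
      mul_add, mul_add, ih (by omega), show (2 * s + 1) / 2 = s by omega,
      show (2 * s + 1 + 1) / 2 = s + 1 by omega, show t - s = (t - (s + 1)) + 1 by omega]
    ring

lemma aux_ternary (s : ℕ) (hs : 1 ≤ s) (hst : 2 * s ≤ t) (w w' : ZMod (p ^ t))
    (hw' : ¬ (p : ZMod (p ^ t)) ∣ w') (hw : w = (p : ZMod (p ^ t)) ^ (2 * s - 1) * w') :
    (Nat.card {x : (ZMod (p ^ t) × ZMod (p ^ t)) × ZMod (p ^ t) //
      x.1.1 ^ 2 + x.1.2 * x.2 = w} : ℤ) = (p : ℤ) ^ (t - 1) * (p + 1) * (p ^ t - p ^ (t - s)) := by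
  have hp := (Fact.out : p.Prime)
  rw [aux_ternary_aux (J := 2 * s) hst w (fun j hj => hw ▸ (pow_dvd_pow _ (by omega)).mul_right _)]
  have : IsEmpty {x : (ZMod (p ^ t) × ZMod (p ^ t)) × ZMod (p ^ t) //
      (p : ZMod (p ^ t)) ^ (2 * s) ∣ x.1.2 ∧ x.1.1 ^ 2 + x.1.2 * x.2 = w} := by
    constructor
    rintro ⟨⟨⟨α, β⟩, γ⟩, h1, h2⟩
    simp only at h1 h2
    obtain ⟨z, rfl⟩ := ZMod.intCast_surjective α
    obtain ⟨y, rfl⟩ := ZMod.intCast_surjective w'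
    have h3 : (p : ZMod (p ^ t)) ^ (2 * s) ∣ ((p ^ (2 * s - 1) * y - z ^ 2 : ℤ) : ZMod (p ^ t)) := by
      push_cast
      rw [← hw, ← h2]
      simpa using h1.mul_right γ
    rw [aux_dvd_int hst] at h3
    have h4 := aux_dvd_int (p := p) (t := t) (i := 1) (by omega) y
    rw [pow_one, pow_one] at h4
    rw [h4] at hw'
    have h5 : (p : ℤ) ^ (2 * s - 1) ∣ z ^ 2 := by
      have := dvd_sub (Dvd.intro y rfl) ((pow_dvd_pow (p : ℤ) (by omega : 2 * s - 1 ≤ 2 * s)).trans h3)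
      simpa using this
    rw [aux_sq_dvd, show (2 * s - 1 + 1) / 2 = (2 * s + 1) / 2 by omega, ← aux_sq_dvd] at h5
    have h6 := dvd_add h3 h5
    rw [sub_add_cancel, show (p : ℤ) ^ (2 * s) = p ^ (2 * s - 1) * p by
      rw [← pow_succ]; congr 1; omega] at h6
    exact hw' ((mul_dvd_mul_iff_left (pow_ne_zero _ (by exact_mod_cast hp.ne_zero))).mp h6)
  rw [Nat.card_of_isEmpty, ← Finset.sum_mul]
  push_cast [hp.one_le]
  have := aux_sum (p := p) (t := t) s (by omega)
  linear_combination (p : ℤ) ^ (t - 1) * this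

lemma aux_SL (ht : 1 ≤ t) (u : ZMod (p ^ t)) (hu : IsUnit u) :
    (Nat.card {x : (ZMod (p ^ t) × ZMod (p ^ t)) × (ZMod (p ^ t) × ZMod (p ^ t)) //
      x.1.1 * x.2.2 - x.1.2 * x.2.1 = u} : ℤ) = (p : ℤ) ^ t * (p ^ (2 * t) - p ^ (2 * (t - 1))) := by
  have hp := (Fact.out : p.Prime)
  have hu' := (aux_unit_iff ht u).mp hu
  have h0 : Nat.card {x : (ZMod (p ^ t) × ZMod (p ^ t)) × (ZMod (p ^ t) × ZMod (p ^ t)) //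
      x.1.1 * x.2.2 - x.1.2 * x.2.1 = u} = 
      Nat.card {x : (ZMod (p ^ t) × ZMod (p ^ t)) × (ZMod (p ^ t) × ZMod (p ^ t)) //
      (True ∧ ¬ ((p : ZMod (p ^ t)) ∣ x.1.1 ∧ (p : ZMod (p ^ t)) ∣ x.1.2)) ∧
       x.1.1 * x.2.2 - x.1.2 * x.2.1 = u} := by
    refine Nat.card_congr (Equiv.subtypeEquivRight fun x => ⟨fun h => ⟨⟨trivial, fun h' => hu' ?_⟩, h⟩,
      fun h => h.2⟩)
    rw [← h]
    exact dvd_sub (h'.1.mul_right _) (h'.2.mul_right _)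
  rw [h0, aux_card_fib (fun y : ZMod (p ^ t) × ZMod (p ^ t) =>
      True ∧ ¬ ((p : ZMod (p ^ t)) ∣ y.1 ∧ (p : ZMod (p ^ t)) ∣ y.2))
      (fun (y z : ZMod (p ^ t) × ZMod (p ^ t)) => y.1 * z.2 - y.2 * z.1 = u) (p ^ t)]
  · have h := aux_card_split (fun y : ZMod (p ^ t) × ZMod (p ^ t) => True)
      (fun y => (p : ZMod (p ^ t)) ∣ y.1 ∧ (p : ZMod (p ^ t)) ∣ y.2)
    have h2 : Nat.card {y : ZMod (p ^ t) × ZMod (p ^ t) // True ∧ 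
        ((p : ZMod (p ^ t)) ∣ y.1 ∧ (p : ZMod (p ^ t)) ∣ y.2)} = p ^ (t - 1) * p ^ (t - 1) := by
      have h3 := aux_card_dvd (p := p) (t := t) (i := 1) ht
      simp only [pow_one] at h3
      simp only [true_and]
      rw [aux_card_fib (fun y : ZMod (p ^ t) => (p : ZMod (p ^ t)) ∣ y)
        (fun _ y => (p : ZMod (p ^ t)) ∣ y) _ (fun _ _ => h3), h3]
    have h4 : Nat.card {y : ZMod (p ^ t) × ZMod (p ^ t) // True} = p ^ t * p ^ t := by
      rw [Nat.card_congr (Equiv.subtypeUnivEquiv (fun _ => trivial)), Nat.card_prod, Nat.card_zmod]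
    rw [h2, h4] at h
    have h5 := congrArg (Nat.cast : ℕ → ℤ) h
    push_cast at h5 ⊢
    rw [two_mul, two_mul, pow_add, pow_add]
    linear_combination -(p : ℤ) ^ t * h5
  · rintro ⟨a, b⟩ ⟨-, h⟩
    simp only at h ⊢
    by_cases ha : (p : ZMod (p ^ t)) ∣ a
    · have hb : IsUnit b := (aux_unit_iff ht b).mpr (fun hb => h ⟨ha, hb⟩)
      obtain ⟨v, hv⟩ := hb.exists_right_inv
      refine (Nat.card_congr ?_).trans (Nat.card_zmod (p ^ t))
      refine ⟨fun z => z.1.2, fun d => ⟨(v * (a * d - u), d), ?_⟩, ?_, ?_⟩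
      · simp only; linear_combination (u - a * d) * hv
      · rintro ⟨⟨c, d⟩, hz⟩
        simp only [Subtype.mk.injEq, Prod.mk.injEq, and_true] at hz ⊢
        linear_combination v * hz + c * hv
      · intro d; rfl
    · have hb : IsUnit a := (aux_unit_iff ht a).mpr ha
      obtain ⟨v, hv⟩ := hb.exists_right_inv
      refine (Nat.card_congr ?_).trans (Nat.card_zmod (p ^ t))
      refine ⟨fun z => z.1.1, fun c => ⟨(c, v * (u + b * c)), ?_⟩, ?_, ?_⟩
      · simp only; linear_combination (u + b * c) * hv
      · rintro ⟨⟨c, d⟩, hz⟩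
        simp only [Subtype.mk.injEq, Prod.mk.injEq, true_and] at hz ⊢
        linear_combination -v * hz + d * hv
      · intro d; rfl

lemma aux_hensel (hp3 : 3 ≤ p) (t : ℕ) : ∃ r s : ℤ, ¬ (p : ℤ) ∣ r ∧ (p : ℤ) ^ (t + 1) ∣ r ^ 2 + s ^ 2 + 1 := by
  have hp := (Fact.out : p.Prime)
  have hpi := Nat.prime_iff_prime_int.mp hp
  induction t with
  | zero =>
    obtain ⟨a, b, h⟩ := ZMod.sq_add_sq p (-1)
    obtain ⟨a, rfl⟩ := ZMod.intCast_surjective a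
    obtain ⟨b, rfl⟩ := ZMod.intCast_surjective b
    have h1 : (p : ℤ) ∣ a ^ 2 + b ^ 2 + 1 := by
      rw [← ZMod.intCast_zmod_eq_zero_iff_dvd]; push_cast; rw [h]; ring
    by_cases ha : (p : ℤ) ∣ a
    · refine ⟨b, a, fun hb => ?_, by rw [zero_add, pow_one]; convert h1 using 1; ring⟩
      have h2 : (p : ℤ) ∣ a ^ 2 + b ^ 2 := dvd_add (dvd_pow ha two_ne_zero) (dvd_pow hb two_ne_zero)
      exact hpi.not_dvd_one ((dvd_add_right h2).mp h1)
    · exact ⟨a, b, ha, by simpa using h1⟩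
  | succ t ih =>
    obtain ⟨r, s, hr, e, he⟩ := ih
    have h2r : ¬ (p : ℤ) ∣ 2 * r := by
      intro h
      rcases hpi.dvd_or_dvd h with h | h
      · have := Int.le_of_dvd (by norm_num) h
        omega
      · exact hr h
    obtain ⟨x, y, hxy⟩ := hpi.coprime_iff_not_dvd.mpr h2r
    refine ⟨r - p ^ (t + 1) * (y * e), s, fun h => hr ?_, ?_⟩
    · have : (p : ℤ) ∣ p ^ (t + 1) * (y * e) := (dvd_pow_self _ (by omega)).mul_right _
      simpa using dvd_add h this
    · refine ⟨x * e + p ^ t * (y * e) ^ 2, ?_⟩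
      have h3 : (p : ℤ) ^ (t + 1 + 1) = p ^ (t + 1) * p := pow_succ _ _
      have h4 : (p : ℤ) ^ (t + 1) = p ^ t * p := pow_succ _ _
      rw [h3]
      linear_combination he - p ^ (t + 1) * e * hxy +
        (p ^ (t + 1) * (y * e) ^ 2) * h4
end

lemma aux_fiberB {R : Type*} [CommRing R] (u ui v w : R) (hu : u * ui = 1) (hw : u * w = - v)
    (a b c d : R) (hA : a * d - b * c = u) :
    Nat.card {y : (R × R) × (R × R) // a * y.2.2 + d * y.1.1 - b * y.2.1 - c * y.1.2 = 0 ∧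
      y.1.1 * y.2.2 - y.1.2 * y.2.1 = v} =
    Nat.card {x : (R × R) × R // x.1.1 ^ 2 + x.1.2 * x.2 = w} := by
  refine Nat.card_congr ⟨fun y => ⟨((ui * (d * y.1.1.1 - b * y.1.2.1), ui * (d * y.1.1.2 - b * y.1.2.2)),
      ui * (a * y.1.2.1 - c * y.1.1.1)), ?_⟩,
    fun x => ⟨((a * x.1.1.1 + b * x.1.2, a * x.1.1.2 - b * x.1.1.1),
      (c * x.1.1.1 + d * x.1.2, c * x.1.1.2 - d * x.1.1.1)), ?_, ?_⟩, ?_, ?_⟩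
  · obtain ⟨⟨⟨e, f⟩, g, h⟩, h1, h2⟩ := y
    simp only at h1 h2 ⊢
    subst hA h2
    have : w = -ui * (e * h - f * g) := by linear_combination ui * hw - w * hu
    rw [this]
    linear_combination ui ^ 2 * (d * e - b * g) * h1 - ui * (e * h - f * g) * hu
  · obtain ⟨⟨⟨α, β⟩, γ⟩, h⟩ := x
    simp only at h ⊢
    ring
  · obtain ⟨⟨⟨α, β⟩, γ⟩, h⟩ := x
    simp only at h ⊢
    subst hA h
    linear_combination -hw
  · rintro ⟨⟨⟨e, f⟩, g, h⟩, h1, h2⟩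
    simp only [Subtype.mk.injEq, Prod.mk.injEq] at h1 h2 ⊢
    subst hA
    refine ⟨⟨?_, ?_⟩, ?_, ?_⟩
    · linear_combination e * hu
    · linear_combination f * hu - ui * b * h1
    · linear_combination g * hu
    · linear_combination h * hu - ui * d * h1
  · rintro ⟨⟨⟨α, β⟩, γ⟩, h⟩
    simp only [Subtype.mk.injEq, Prod.mk.injEq] at h ⊢
    subst hA
    refine ⟨⟨?_, ?_⟩, ?_⟩
    · linear_combination α * hu
    · linear_combination β * hu
    · linear_combination γ * hu

lemma aux_iso {R : Type*} [CommRing R] (r s i2 : R) (hrs : r ^ 2 + s ^ 2 + 1 = 0) (h2 : i2 * 2 = 1)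
    (u v : R) :
    Nat.card {X : Matrix (Fin 2) (Fin 4) R // X * Xᵀ = !![u, 0; 0, v]} =
    Nat.card {q : ((R × R) × (R × R)) × ((R × R) × (R × R)) //
      q.1.1.1 * q.1.2.2 - q.1.1.2 * q.1.2.1 = u ∧
      (q.1.1.1 * q.2.2.2 + q.1.2.2 * q.2.1.1 - q.1.1.2 * q.2.2.1 - q.1.2.1 * q.2.1.2 = 0 ∧
      q.2.1.1 * q.2.2.2 - q.2.1.2 * q.2.2.1 = v)} := by
  let φ : (Fin 4 → R) ≃ (R × R) × (R × R) :=
    { toFun := fun x => ((x 0 + (r * x 2 + s * x 3), x 1 + (s * x 2 - r * x 3)),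
        (-x 1 + (s * x 2 - r * x 3), x 0 - (r * x 2 + s * x 3)))
      invFun := fun y => ![i2 * (y.1.1 + y.2.2), i2 * (y.1.2 - y.2.1),
        -i2 * (r * (y.1.1 - y.2.2) + s * (y.1.2 + y.2.1)),
        -i2 * (s * (y.1.1 - y.2.2) - r * (y.1.2 + y.2.1))]
      left_inv := by
        intro x
        ext i
        fin_cases i <;> simp
        · linear_combination x 0 * h2
        · linear_combination x 1 * h2
        · linear_combination (-2 * i2) * x 2 * hrs + x 2 * h2
        · linear_combination (-2 * i2) * x 3 * hrs + x 3 * h2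
      right_inv := by
        rintro ⟨⟨a, b⟩, c, d⟩
        simp
        refine ⟨⟨?_, ?_⟩, ?_, ?_⟩
        · linear_combination a * h2 - i2 * (a - d) * hrs
        · linear_combination b * h2 - i2 * (b + c) * hrs
        · linear_combination c * h2 - i2 * (b + c) * hrs
        · linear_combination d * h2 + i2 * (a - d) * hrs }
  let ψ : Matrix (Fin 2) (Fin 4) R ≃ ((R × R) × (R × R)) × ((R × R) × (R × R)) :=
    (finTwoArrowEquiv (Fin 4 → R)).trans (φ.prodCongr φ)
  refine Nat.card_congr (ψ.subtypeEquiv fun X => ?_)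
  have e : X * Xᵀ = !![u, 0; 0, v] ↔ 
      (X 0 0 ^ 2 + X 0 1 ^ 2 + X 0 2 ^ 2 + X 0 3 ^ 2 = u ∧
      X 0 0 * X 1 0 + X 0 1 * X 1 1 + X 0 2 * X 1 2 + X 0 3 * X 1 3 = 0 ∧
      X 1 0 ^ 2 + X 1 1 ^ 2 + X 1 2 ^ 2 + X 1 3 ^ 2 = v) := by
    rw [← Matrix.ext_iff]
    simp only [Fin.forall_fin_two, Matrix.mul_apply, Fin.sum_univ_four, Matrix.transpose_apply]
    simp only [Matrix.of_apply, Matrix.cons_val', Matrix.cons_val_zero, Matrix.cons_val_one,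
      Matrix.cons_val_fin_one]
    constructor
    · rintro ⟨⟨h1, h2⟩, h3, h4⟩
      exact ⟨by linear_combination h1, h2, by linear_combination h4⟩
    · rintro ⟨h1, h2, h3⟩
      exact ⟨⟨by linear_combination h1, h2⟩, by linear_combination h2, by linear_combination h3⟩
  rw [e]
  have hψ : ψ X = (((X 0 0 + (r * X 0 2 + s * X 0 3), X 0 1 + (s * X 0 2 - r * X 0 3)),
      (-X 0 1 + (s * X 0 2 - r * X 0 3), X 0 0 - (r * X 0 2 + s * X 0 3))),
      ((X 1 0 + (r * X 1 2 + s * X 1 3), X 1 1 + (s * X 1 2 - r * X 1 3)),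
      (-X 1 1 + (s * X 1 2 - r * X 1 3), X 1 0 - (r * X 1 2 + s * X 1 3)))) := rfl
  rw [hψ]
  refine and_congr ?_ (and_congr ?_ ?_)
  · constructor <;> intro h
    · linear_combination h - (X 0 2 ^ 2 + X 0 3 ^ 2) * hrs
    · linear_combination h + (X 0 2 ^ 2 + X 0 3 ^ 2) * hrs
  · constructor <;> intro h
    · linear_combination 2 * h - 2 * (X 0 2 * X 1 2 + X 0 3 * X 1 3) * hrs
    · linear_combination i2 * h + 2 * i2 * (X 0 2 * X 1 2 + X 0 3 * X 1 3) * hrs -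
        (X 0 0 * X 1 0 + X 0 1 * X 1 1 + X 0 2 * X 1 2 + X 0 3 * X 1 3) * h2
  · constructor <;> intro h
    · linear_combination h - (X 1 2 ^ 2 + X 1 3 ^ 2) * hrs
    · linear_combination h + (X 1 2 ^ 2 + X 1 3 ^ 2) * hrs

lemma aux_final (P : ℤ) (c s : ℕ) :
    P ^ (c + s + 1) * (P ^ (2 * (c + s + 1)) - P ^ (2 * (c + s))) *
      (P ^ (c + s) * (P + 1) * (P ^ (c + s + 1) - P ^ (c + 1))) * P ^ (3 + s) =
    P ^ (5 * (c + s + 1)) * (P + 1) ^ 2 * ((0 + 1) * (P - 1) * P ^ s - (P ^ (0 + 1) - 1)) := by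
  ring

theorem local_density_ramified_odd (n : ℤ) (hodd : Odd n) (hn : 3 ≤ n)
    (p : ℕ) [Fact p.Prime] (hp : 3 ≤ p) (hpn : (p : ℤ) ∣ n ^ 2 - 4)
    (a b : ℕ) (m k : ℤ)
    (hm : n + 2 = m * (p : ℤ) ^ a) (hk : n - 2 = k * (p : ℤ) ^ b)
    (hpm : ¬ (p : ℤ) ∣ m) (hpk : ¬ (p : ℤ) ∣ k)
    (hab : a ≤ b) (hodd' : Odd (a + b)) :
    ∃ T : ℕ, 1 ≤ T ∧ ∀ t : ℕ, T ≤ t →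
      (Nat.card {X : Matrix (Fin 2) (Fin 4) (ZMod (p ^ t)) //
          X * Xᵀ = !![(n : ZMod (p ^ t)) + 2, 0; 0, (n : ZMod (p ^ t)) - 2]} : ℤ)
          * (p : ℤ) ^ (3 + (a + b + 1) / 2)
        = (p : ℤ) ^ (5 * t) * ((p : ℤ) + 1) ^ 2 *
            (((a : ℤ) + 1) * ((p : ℤ) - 1) * (p : ℤ) ^ ((a + b + 1) / 2)
              - ((p : ℤ) ^ (a + 1) - 1)) := by
  have hpp := (Fact.out : p.Prime)
  have hpi := Nat.prime_iff_prime_int.mp hpp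
  have hp2 : ¬ (p : ℤ) ∣ 2 := fun h => by
    have := Int.le_of_dvd (by norm_num) h
    omega
  have ha : a = 0 := by
    by_contra ha
    have h1 : (p : ℤ) ∣ n + 2 := hm ▸ (dvd_pow_self _ ha).mul_left _
    have h2 : (p : ℤ) ∣ n - 2 := hk ▸ (dvd_pow_self _ (by omega)).mul_left _
    have h3 : (p : ℤ) ∣ 2 * 2 := by
      have := dvd_sub h1 h2
      ring_nf at this ⊢
      exact this
    rcases hpi.dvd_or_dvd h3 with h | h <;> exact hp2 h
  subst ha
  obtain ⟨s', hs'⟩ := hodd'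
  obtain ⟨s, hs⟩ : ∃ s, s = s' + 1 := ⟨_, rfl⟩
  have hb : b = 2 * s - 1 := by omega
  have hs1 : 1 ≤ s := by omega
  rw [show (0 + b + 1) / 2 = s by omega]
  refine ⟨2 * s, by omega, fun t ht => ?_⟩
  have hnd : ∀ z : ℤ, ¬ (p : ℤ) ∣ z → IsUnit (z : ZMod (p ^ t)) := fun z hz => by
    rw [aux_unit_iff (by omega)]
    have h4 := aux_dvd_int (p := p) (t := t) (i := 1) (by omega) z
    rw [pow_one, pow_one] at h4
    rwa [h4]
  obtain ⟨r, q, -, hrq⟩ := aux_hensel hp t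
  have hrq' : (r : ZMod (p ^ t)) ^ 2 + (q : ZMod (p ^ t)) ^ 2 + 1 = 0 := by
    have : ((r ^ 2 + q ^ 2 + 1 : ℤ) : ZMod (p ^ t)) = 0 := by
      rw [ZMod.intCast_zmod_eq_zero_iff_dvd]
      push_cast
      exact (pow_dvd_pow _ (by omega)).trans hrq
    push_cast at this
    exact this
  obtain ⟨i2, hi2⟩ := (hnd 2 hp2).exists_left_inv
  push_cast at hi2
  have hum := hnd m hpm
  obtain ⟨ui, hui⟩ := hum.exists_right_inv
  have hum' : (n : ZMod (p ^ t)) + 2 = m := by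
    have := congrArg (Int.cast : ℤ → ZMod (p ^ t)) hm
    push_cast at this
    rw [this]; ring
  have huk : (n : ZMod (p ^ t)) - 2 = k * (p : ZMod (p ^ t)) ^ b := by
    have := congrArg (Int.cast : ℤ → ZMod (p ^ t)) hk
    push_cast at this
    exact this
  rw [aux_iso _ _ _ hrq' hi2, hum', huk]
  have hw' : IsUnit (-(ui * k) : ZMod (p ^ t)) :=
    ((IsUnit.of_mul_eq_one_right _ hui).mul (hnd k hpk)).neg
  rw [aux_unit_iff (by omega)] at hw'
  have hter := aux_ternary s hs1 ht _ _ hw' rfl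
  rw [aux_card_fib (fun A : (ZMod (p ^ t) × ZMod (p ^ t)) × (ZMod (p ^ t) × ZMod (p ^ t)) =>
      A.1.1 * A.2.2 - A.1.2 * A.2.1 = (m : ZMod (p ^ t)))
      (fun (A B : (ZMod (p ^ t) × ZMod (p ^ t)) × (ZMod (p ^ t) × ZMod (p ^ t))) =>
      A.1.1 * B.2.2 + A.2.2 * B.1.1 - A.1.2 * B.2.1 - A.2.1 * B.1.2 = 0 ∧
      B.1.1 * B.2.2 - B.1.2 * B.2.1 = k * (p : ZMod (p ^ t)) ^ b) _
      (fun A hA => aux_fiberB _ ui _ ((p : ZMod (p ^ t)) ^ (2 * s - 1) * (-(ui * k))) hui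
        (by rw [hb]; linear_combination (-(p : ZMod (p ^ t)) ^ (2 * s - 1) * k) * hui) _ _ _ _ hA)]
  rw [Nat.cast_mul, hter, aux_SL (by omega) _ hum]
  obtain ⟨c, rfl⟩ : ∃ c, t = c + s + 1 := ⟨t - s - 1, by omega⟩
  rw [show c + s + 1 - 1 = c + s by omega, show c + s + 1 - s = c + 1 by omega]
  exact_mod_cast aux_final (p : ℤ) c s
end

section
/- For every odd integer n and every integer t ≥ 3, the number of 2×4 matrices X over ℤ/2^tℤ satisfying X·Xᵀ = G_n (mod 2^t) equals (3/2) · 2^{5t} = 3 · 2^{5t − 1}; that is, for odd n the dyadic solution count defining the local density γ_2 stabilizes already at t = 3. -/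
open Matrix

/-- Dyadic square roots exist for integers congruent to `1` modulo `8`. -/
lemma exists_sqrt_int (u : ℤ) (hu : (8:ℤ) ∣ u - 1) (s : ℕ) :
    ∃ z : ℤ, (2:ℤ) ^ (s + 3) ∣ z ^ 2 - u := by
  induction s with
  | zero => exact ⟨1, by obtain ⟨k, hk⟩ := hu; exact ⟨-k, by norm_num; linarith⟩⟩
  | succ s ih =>
    obtain ⟨z, m, hm⟩ := ih
    have hz : Odd z := by
      by_contra h
      rw [Int.not_odd_iff_even] at h
      obtain ⟨c, hc⟩ := h
      obtain ⟨k, hk⟩ := hu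
      have h1 : u = 8 * k + 1 := by linarith
      rw [hc, h1, pow_add] at hm
      have : (2:ℤ) * (2 * c ^ 2 - 4 * k - 4 * (2 ^ s * m)) = 1 := by linear_combination hm
      omega
    rcases Int.even_or_odd m with ⟨c, hc⟩ | hmo
    · exact ⟨z, c, by rw [hm, hc]; ring⟩
    · obtain ⟨c, hc⟩ := hmo
      obtain ⟨d, hd⟩ := hz
      refine ⟨z + 2 ^ (s + 2), c + d + 1 + 2 ^ s, ?_⟩
      have : (z + 2 ^ (s + 2)) ^ 2 - u = 2 ^ (s + 3) * m + 2 ^ (s + 3) * z + 2 ^ (s + 2) * 2 ^ (s + 2) := by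
        rw [← hm]; ring
      rw [this, hc, hd]; ring

/-- Two odd integers with the same square modulo `2^(s+3)`. -/
lemma sq_eq_int (z w : ℤ) (hz : Odd z) (hw : Odd w) (s : ℕ)
    (h : (2:ℤ) ^ (s + 3) ∣ z ^ 2 - w ^ 2) :
    (2:ℤ) ^ (s + 2) ∣ z - w ∨ (2:ℤ) ^ (s + 2) ∣ z + w := by
  obtain ⟨p, hp⟩ := hz.sub_odd hw
  obtain ⟨q, hq⟩ := hz.add_odd hw
  obtain ⟨m, hm⟩ := h
  have h1 : p * q = 2 ^ (s + 1) * m := by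
    have : 4 * (p * q) = 4 * (2 ^ (s + 1) * m) := by
      have e : z ^ 2 - w ^ 2 = (p + p) * (q + q) := by rw [← hp, ← hq]; ring
      rw [e] at hm
      linear_combination hm
    linarith
  have h2 : Odd (p + q) := by
    have : p + q = z := by linarith
    rwa [this]
  rcases Int.even_or_odd p with hpe | hpo
  · have hqo : Odd q := by
      by_contra hc
      rw [Int.not_odd_iff_even] at hc
      exact (Int.not_even_iff_odd.mpr h2) (hpe.add hc)
    left
    have hc : IsCoprime ((2:ℤ) ^ (s + 1)) q := by
      apply IsCoprime.pow_left
      exact Int.isCoprime_two_left.mpr hqo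
    obtain ⟨k, hk⟩ := hc.dvd_of_dvd_mul_right (⟨m, h1⟩ : (2:ℤ) ^ (s + 1) ∣ p * q)
    exact ⟨k, by rw [hp, hk]; ring⟩
  · right
    have hc : IsCoprime ((2:ℤ) ^ (s + 1)) p := by
      apply IsCoprime.pow_left
      exact Int.isCoprime_two_left.mpr hpo
    obtain ⟨k, hk⟩ := hc.dvd_of_dvd_mul_left (⟨m, h1⟩ : (2:ℤ) ^ (s + 1) ∣ p * q)
    exact ⟨k, by rw [hq, hk]; ring⟩

/-- Reduction modulo `8`. -/
def red8 (s : ℕ) : ZMod (2 ^ (s + 3)) →+* ZMod 8 :=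
  ZMod.castHom (⟨2 ^ s, by ring⟩ : 8 ∣ 2 ^ (s + 3)) (ZMod 8)

lemma sq_one_iff_odd (k : ℤ) : ((k : ZMod 8)) ^ 2 = 1 ↔ Odd k := by
  have h0 : ∀ v : ZMod 8, v ^ 2 = 1 ↔ v = 1 ∨ v = 3 ∨ v = 5 ∨ v = 7 := by decide
  rw [h0]
  have e1 := ZMod.intCast_eq_intCast_iff_dvd_sub k 1 8
  have e3 := ZMod.intCast_eq_intCast_iff_dvd_sub k 3 8
  have e5 := ZMod.intCast_eq_intCast_iff_dvd_sub k 5 8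
  have e7 := ZMod.intCast_eq_intCast_iff_dvd_sub k 7 8
  push_cast at e1 e3 e5 e7
  rw [e1, e3, e5, e7, Int.odd_iff]
  omega

/-- Number of odd square roots. -/
lemma sum_sqrt (s : ℕ) (u : ZMod (2 ^ (s + 3))) :
    (∑ z : ZMod (2 ^ (s + 3)), if red8 s z ^ 2 = 1 ∧ z ^ 2 = u then 1 else 0)
      = if red8 s u = 1 then 4 else 0 := by
  rw [← Finset.card_filter]
  split_ifs with h
  · obtain ⟨u, rfl⟩ := ZMod.intCast_surjective u
    have hu : (8:ℤ) ∣ u - 1 := by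
      rw [map_intCast] at h
      have := (ZMod.intCast_eq_intCast_iff_dvd_sub 1 u 8).mp (by rw [h]; simp)
      exact_mod_cast this
    obtain ⟨w, hw⟩ := exists_sqrt_int u hu s
    have hwu : (w : ZMod (2 ^ (s + 3))) ^ 2 = u := by
      have := (ZMod.intCast_eq_intCast_iff_dvd_sub u (w ^ 2) (2 ^ (s + 3))).mpr (by exact_mod_cast hw)
      rw [this]; push_cast; rfl
    have hwo : Odd w := by
      rw [← sq_one_iff_odd, ← map_intCast (red8 s) w, ← map_pow, hwu, h]
    have key : ∀ a b : ℤ, ((a : ZMod (2 ^ (s + 3))) = b ↔ (2:ℤ) ^ (s + 3) ∣ b - a) := by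
      intro a b
      have := ZMod.intCast_eq_intCast_iff_dvd_sub a b (2 ^ (s + 3))
      exact_mod_cast this
    have pp : (2:ℤ) ^ (s + 3) = 8 * 2 ^ s := by ring
    have pp2 : (2:ℤ) ^ (s + 2) = 4 * 2 ^ s := by ring
    have hpos : (0:ℤ) < 2 ^ s := by positivity
    have hset : (Finset.univ.filter fun z : ZMod (2 ^ (s + 3)) => red8 s z ^ 2 = 1 ∧ z ^ 2 = u)
        = {((w : ℤ) : ZMod (2 ^ (s + 3))), ((-w : ℤ) : ZMod (2 ^ (s + 3))),
          ((w + 2 ^ (s + 2) : ℤ) : ZMod (2 ^ (s + 3))),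
          ((-w + 2 ^ (s + 2) : ℤ) : ZMod (2 ^ (s + 3)))} := by
      ext z
      obtain ⟨z, rfl⟩ := ZMod.intCast_surjective z
      simp only [Finset.mem_filter, Finset.mem_univ, true_and, Finset.mem_insert,
        Finset.mem_singleton]
      rw [map_intCast, sq_one_iff_odd, ← hwu, ← Int.cast_pow, ← Int.cast_pow]
      simp only [key]
      obtain ⟨d, hd⟩ := hwo
      constructor
      · rintro ⟨ho, hz⟩
        rcases sq_eq_int w z ⟨d, hd⟩ ho s hz with ⟨k, hk⟩ | ⟨k, hk⟩
        · rcases Int.even_or_odd k with ⟨j, hj⟩ | ⟨j, hj⟩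
          · left; exact ⟨j, by rw [hk, hj]; ring⟩
          · right; right; left
            exact ⟨j + 1, by rw [add_sub_right_comm, hk, hj]; ring⟩
        · rcases Int.even_or_odd k with ⟨j, hj⟩ | ⟨j, hj⟩
          · right; left; exact ⟨-j, by rw [hj] at hk; linear_combination -hk⟩
          · right; right; right
            exact ⟨-j, by rw [hj] at hk; linear_combination -hk⟩
      · rintro (⟨k, hk⟩ | ⟨k, hk⟩ | ⟨k, hk⟩ | ⟨k, hk⟩)
        · have hz : z = w - 2 ^ (s + 3) * k := by linarith
          refine ⟨⟨d - 2 ^ (s + 2) * k, by rw [hz, hd]; ring⟩, ⟨2 * w * k - 2 ^ (s + 3) * k ^ 2, by rw [hz]; ring⟩⟩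
        · have hz : z = -w - 2 ^ (s + 3) * k := by linarith
          refine ⟨⟨-d - 1 - 2 ^ (s + 2) * k, by rw [hz, hd]; ring⟩, ⟨-2 * w * k - 2 ^ (s + 3) * k ^ 2, by rw [hz]; ring⟩⟩
        · have hz : z = w + 2 ^ (s + 2) * (1 - 2 * k) := by linear_combination -hk
          refine ⟨⟨d + 2 ^ (s + 1) * (1 - 2 * k), by rw [hz, hd]; ring⟩,
            ⟨-w * (1 - 2 * k) - 2 ^ (s + 1) * (1 - 2 * k) ^ 2, by rw [hz]; ring⟩⟩
        · have hz : z = -w + 2 ^ (s + 2) * (1 - 2 * k) := by linear_combination -hk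
          refine ⟨⟨-d - 1 + 2 ^ (s + 1) * (1 - 2 * k), by rw [hz, hd]; ring⟩,
            ⟨w * (1 - 2 * k) - 2 ^ (s + 1) * (1 - 2 * k) ^ 2, by rw [hz]; ring⟩⟩
    rw [hset]
    obtain ⟨d, hd⟩ := hwo
    have n4 : ∀ x : ℤ, (∃ c, x = 4 * c + 2) → ¬ (2:ℤ) ^ (s + 3) ∣ x := by
      rintro x ⟨c, hc⟩ ⟨k, hk⟩
      rw [pp, mul_assoc] at hk
      omega
    have n8 : ¬ (2:ℤ) ^ (s + 3) ∣ 2 ^ (s + 2) := by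
      intro hh
      have := Int.le_of_dvd (by positivity) hh
      rw [pp, pp2] at this
      linarith
    rw [Finset.card_insert_of_notMem, Finset.card_insert_of_notMem, Finset.card_insert_of_notMem,
      Finset.card_singleton]
    · rw [Finset.mem_singleton, key]
      exact n4 _ ⟨-d - 1, by rw [hd]; ring⟩
    · simp only [Finset.mem_singleton, Finset.mem_insert, key, not_or]
      refine ⟨n4 _ ⟨d + 2 ^ s, by rw [hd]; ring⟩, ?_⟩
      simpa using n8
    · simp only [Finset.mem_singleton, Finset.mem_insert, key, not_or]
      refine ⟨n4 _ ⟨-d - 1, by rw [hd]; ring⟩, by simpa using n8,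
        n4 _ ⟨-d - 1 + 2 ^ s, by rw [hd]; ring⟩⟩
  · rw [Finset.card_eq_zero, Finset.filter_eq_empty_iff]
    rintro z - ⟨h1, rfl⟩
    rw [map_pow] at h
    exact h h1

/-- Summing a function of the residue modulo `8`. -/
lemma sum_red8 (s : ℕ) (g : ZMod 8 → ℕ) :
    ∑ z : ZMod (2 ^ (s + 3)), g (red8 s z) = 2 ^ s * ∑ v : ZMod 8, g v := by
  have hsurj : Function.Surjective (red8 s) := ZMod.ringHom_surjective _
  have hf : ∀ v : ZMod 8, (Finset.univ.filter fun z => red8 s z = v).card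
      = (Finset.univ.filter fun z => red8 s z = 0).card := by
    intro v
    obtain ⟨y, rfl⟩ := hsurj v
    refine Finset.card_bij (fun z _ => z - y) ?_ ?_ ?_
    · intro z hz
      simpa [sub_eq_zero] using hz
    · intro z _ z' _ h
      simpa using h
    · intro z hz
      exact ⟨z + y, by simpa using hz, by simp⟩
  have htot : ∀ g : ZMod 8 → ℕ, ∑ z : ZMod (2 ^ (s + 3)), g (red8 s z)
      = (Finset.univ.filter fun z => red8 s z = 0).card * ∑ v : ZMod 8, g v := by
    intro g
    rw [← Finset.sum_fiberwise (s := Finset.univ) (g := red8 s), Finset.mul_sum]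
    refine Finset.sum_congr rfl fun v _ => ?_
    rw [← hf v, Finset.sum_congr rfl (g := fun _ => g v), Finset.sum_const, smul_eq_mul]
    intro z hz
    rw [(Finset.mem_filter.mp hz).2]
  have h1 := htot (fun _ => 1)
  simp only [Finset.sum_const, Finset.card_univ, ZMod.card, smul_eq_mul, mul_one] at h1
  rw [htot g]
  congr 1
  have h2 : 2 ^ (s + 3) = 2 ^ s * 8 := by ring
  omega

/-- Summing over an odd variable. -/
lemma sum_odd (s : ℕ) (c : ZMod (2 ^ (s + 3))) (P : Prop) [Decidable P] (a : ZMod (2 ^ (s + 3))) :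
    (∑ z : ZMod (2 ^ (s + 3)), if P ∧ red8 s z ^ 2 = 1 ∧ z ^ 2 + c = a then 1 else 0)
      = if P ∧ 1 + red8 s c = red8 s a then 4 else 0 := by
  by_cases hP : P
  · have h := sum_sqrt s (a - c)
    simp only [hP, true_and]
    simp only [eq_sub_iff_add_eq, map_sub] at h
    rw [h]
    congr 1
    rw [sub_eq_iff_eq_add]
    exact propext eq_comm
  · simp [hP]

lemma sum_red8_two (s : ℕ) (g : ZMod 8 → ZMod 8 → ℕ) :
    ∑ y : ZMod (2 ^ (s + 3)), ∑ z : ZMod (2 ^ (s + 3)), g (red8 s y) (red8 s z)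
      = 2 ^ (2 * s) * ∑ u : ZMod 8, ∑ v : ZMod 8, g u v := by
  have h : ∀ y : ZMod (2 ^ (s + 3)), ∑ z : ZMod (2 ^ (s + 3)), g (red8 s y) (red8 s z)
      = 2 ^ s * ∑ v : ZMod 8, g (red8 s y) v := fun y => sum_red8 s (g (red8 s y))
  simp only [h]
  rw [← Finset.mul_sum, sum_red8 s (fun u => ∑ v : ZMod 8, g u v)]
  ring

lemma sum_red8_three (s : ℕ) (g : ZMod 8 → ZMod 8 → ZMod 8 → ℕ) :
    ∑ x : ZMod (2 ^ (s + 3)), ∑ y : ZMod (2 ^ (s + 3)), ∑ z : ZMod (2 ^ (s + 3)),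
      g (red8 s x) (red8 s y) (red8 s z)
      = 2 ^ (3 * s) * ∑ u : ZMod 8, ∑ v : ZMod 8, ∑ w : ZMod 8, g u v w := by
  have h : ∀ x : ZMod (2 ^ (s + 3)), ∑ y : ZMod (2 ^ (s + 3)), ∑ z : ZMod (2 ^ (s + 3)),
      g (red8 s x) (red8 s y) (red8 s z)
      = 2 ^ (2 * s) * ∑ v : ZMod 8, ∑ w : ZMod 8, g (red8 s x) v w :=
    fun x => sum_red8_two s (g (red8 s x))
  simp only [h]
  rw [← Finset.mul_sum, sum_red8 s (fun u => ∑ v : ZMod 8, ∑ w : ZMod 8, g u v w)]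
  ring

lemma sum_rot {R : Type*} [Fintype R] (f : R → R → R → ℕ) :
    ∑ x, ∑ y, ∑ z, f x y z = ∑ y, ∑ z, ∑ x, f x y z := by
  rw [Finset.sum_comm]
  exact Finset.sum_congr rfl fun y _ => Finset.sum_comm

lemma sum_rot_four {R : Type*} [Fintype R] (f : R → R → R → R → ℕ) :
    ∑ x, ∑ y, ∑ z, ∑ w, f x y z w = ∑ y, ∑ z, ∑ w, ∑ x, f x y z w := by
  rw [Finset.sum_comm]
  exact Finset.sum_congr rfl fun y _ => sum_rot (fun x z w => f x y z w)

/-- The squares modulo `8`. -/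
lemma sq_cases (v : ZMod 8) (h : v ^ 2 ≠ 1) : v ^ 2 = 0 ∨ v ^ 2 = 4 := by
  revert v
  decide

lemma sum_sq (g : ZMod 8 → ℕ) : ∑ v : ZMod 8, g (v ^ 2) = 2 * g 0 + 4 * g 1 + 2 * g 4 := by
  have h : ∑ v : ZMod 8, g (v ^ 2) = g (0 ^ 2) + g (1 ^ 2) + g (2 ^ 2) + g (3 ^ 2) + g (4 ^ 2)
    + g (5 ^ 2) + g (6 ^ 2) + g (7 ^ 2) := Fin.sum_univ_eight (fun v : ZMod 8 => g (v ^ 2))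
  have e0 : (0 : ZMod 8) ^ 2 = 0 := by decide
  have e1 : (1 : ZMod 8) ^ 2 = 1 := by decide
  have e2 : (2 : ZMod 8) ^ 2 = 4 := by decide
  have e3 : (3 : ZMod 8) ^ 2 = 1 := by decide
  have e4 : (4 : ZMod 8) ^ 2 = 0 := by decide
  have e5 : (5 : ZMod 8) ^ 2 = 1 := by decide
  have e6 : (6 : ZMod 8) ^ 2 = 4 := by decide
  have e7 : (7 : ZMod 8) ^ 2 = 1 := by decide
  rw [h, e0, e1, e2, e3, e4, e5, e6, e7]
  ring

lemma sum_sq_two (g : ZMod 8 → ZMod 8 → ℕ) : ∑ u : ZMod 8, ∑ v : ZMod 8, g (u ^ 2) (v ^ 2)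
    = 2 * (2 * g 0 0 + 4 * g 0 1 + 2 * g 0 4) + 4 * (2 * g 1 0 + 4 * g 1 1 + 2 * g 1 4)
      + 2 * (2 * g 4 0 + 4 * g 4 1 + 2 * g 4 4) := by
  rw [sum_sq (fun a => ∑ v : ZMod 8, g a (v ^ 2)), sum_sq, sum_sq, sum_sq]

lemma sum_sq_three (g : ZMod 8 → ZMod 8 → ZMod 8 → ℕ) :
    ∑ u : ZMod 8, ∑ v : ZMod 8, ∑ w : ZMod 8, g (u ^ 2) (v ^ 2) (w ^ 2)
    = 2 * (2 * (2 * g 0 0 0 + 4 * g 0 0 1 + 2 * g 0 0 4)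
        + 4 * (2 * g 0 1 0 + 4 * g 0 1 1 + 2 * g 0 1 4)
        + 2 * (2 * g 0 4 0 + 4 * g 0 4 1 + 2 * g 0 4 4))
      + 4 * (2 * (2 * g 1 0 0 + 4 * g 1 0 1 + 2 * g 1 0 4)
        + 4 * (2 * g 1 1 0 + 4 * g 1 1 1 + 2 * g 1 1 4)
        + 2 * (2 * g 1 4 0 + 4 * g 1 4 1 + 2 * g 1 4 4))
      + 2 * (2 * (2 * g 4 0 0 + 4 * g 4 0 1 + 2 * g 4 0 4)
        + 4 * (2 * g 4 1 0 + 4 * g 4 1 1 + 2 * g 4 1 4)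
        + 2 * (2 * g 4 4 0 + 4 * g 4 4 1 + 2 * g 4 4 4)) := by
  rw [sum_sq (fun a => ∑ v : ZMod 8, ∑ w : ZMod 8, g a (v ^ 2) (w ^ 2)), sum_sq_two, sum_sq_two,
    sum_sq_two]

lemma table3 : (∑ y : ZMod 8, ∑ z : ZMod 8, if True ∧ 1 + (y ^ 2 + z ^ 2) = 5 then 4 else 0)
    + ((∑ x : ZMod 8, ∑ z : ZMod 8, if x ^ 2 ≠ 1 ∧ 1 + (x ^ 2 + z ^ 2) = 5 then 4 else 0)
    + (∑ x : ZMod 8, ∑ y : ZMod 8,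
      if (x ^ 2 ≠ 1 ∧ y ^ 2 ≠ 1) ∧ 1 + (x ^ 2 + y ^ 2) = 5 then 4 else 0)) = 96 := by
  rw [sum_sq_two (fun y z => if True ∧ 1 + (y + z) = 5 then 4 else 0),
    sum_sq_two (fun x z => if x ≠ 1 ∧ 1 + (x + z) = 5 then 4 else 0),
    sum_sq_two (fun x y => if (x ≠ 1 ∧ y ≠ 1) ∧ 1 + (x + y) = 5 then 4 else 0)]
  decide +kernel

lemma table4 : ∀ b : ZMod 8, b ^ 2 = 1 →
    (∑ y : ZMod 8, ∑ z : ZMod 8, ∑ w : ZMod 8,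
      if True ∧ 1 + (y ^ 2 + z ^ 2 + w ^ 2) = b then 4 else 0)
    + ((∑ x : ZMod 8, ∑ z : ZMod 8, ∑ w : ZMod 8,
      if x ^ 2 ≠ 1 ∧ 1 + (x ^ 2 + z ^ 2 + w ^ 2) = b then 4 else 0)
    + ((∑ x : ZMod 8, ∑ y : ZMod 8, ∑ w : ZMod 8,
      if (x ^ 2 ≠ 1 ∧ y ^ 2 ≠ 1) ∧ 1 + (x ^ 2 + y ^ 2 + w ^ 2) = b then 4 else 0)
    + (∑ x : ZMod 8, ∑ y : ZMod 8, ∑ z : ZMod 8,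
      if (x ^ 2 ≠ 1 ∧ y ^ 2 ≠ 1 ∧ z ^ 2 ≠ 1) ∧ 1 + (x ^ 2 + y ^ 2 + z ^ 2) = b
        then 4 else 0))) = 512 := by
  intro b hb
  rw [sum_sq_three (fun y z w => if True ∧ 1 + (y + z + w) = b then 4 else 0),
    sum_sq_three (fun x z w => if x ≠ 1 ∧ 1 + (x + z + w) = b then 4 else 0),
    sum_sq_three (fun x y w => if (x ≠ 1 ∧ y ≠ 1) ∧ 1 + (x + y + w) = b then 4 else 0),
    sum_sq_three (fun x y z => if (x ≠ 1 ∧ y ≠ 1 ∧ z ≠ 1) ∧ 1 + (x + y + z) = b then 4 else 0)]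
  revert b
  decide +kernel

/-- Sums of three squares. -/
lemma count3 (s : ℕ) (a : ZMod (2 ^ (s + 3))) (ha : red8 s a = 5) :
    (∑ x : ZMod (2 ^ (s + 3)), ∑ y : ZMod (2 ^ (s + 3)), ∑ z : ZMod (2 ^ (s + 3)),
      if x ^ 2 + y ^ 2 + z ^ 2 = a then 1 else 0) = 2 ^ (2 * s) * 96 := by
  have hsplit : ∀ x y z : ZMod (2 ^ (s + 3)), (if x ^ 2 + y ^ 2 + z ^ 2 = a then 1 else 0)
      = (if True ∧ red8 s x ^ 2 = 1 ∧ x ^ 2 + (y ^ 2 + z ^ 2) = a then 1 else 0)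
      + ((if red8 s x ^ 2 ≠ 1 ∧ red8 s y ^ 2 = 1 ∧ y ^ 2 + (x ^ 2 + z ^ 2) = a then 1 else 0)
      + (if (red8 s x ^ 2 ≠ 1 ∧ red8 s y ^ 2 ≠ 1) ∧ red8 s z ^ 2 = 1 ∧
          z ^ 2 + (x ^ 2 + y ^ 2) = a then 1 else 0)) := by
    intro x y z
    have e1 : x ^ 2 + (y ^ 2 + z ^ 2) = x ^ 2 + y ^ 2 + z ^ 2 := by ring
    have e2 : y ^ 2 + (x ^ 2 + z ^ 2) = x ^ 2 + y ^ 2 + z ^ 2 := by ring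
    have e3 : z ^ 2 + (x ^ 2 + y ^ 2) = x ^ 2 + y ^ 2 + z ^ 2 := by ring
    rw [e1, e2, e3]
    by_cases h : x ^ 2 + y ^ 2 + z ^ 2 = a
    · have h8 := congrArg (red8 s) h
      simp only [map_add, map_pow, ha] at h8
      have hd : ∀ p q r : ZMod 8, p ^ 2 + q ^ 2 + r ^ 2 = 5 → p ^ 2 ≠ 1 → q ^ 2 ≠ 1 → r ^ 2 = 1 := by
        intro p q r hs hp hq
        by_contra hr
        rcases sq_cases p hp with e | e <;> rcases sq_cases q hq with h2 | h2 <;>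
          rcases sq_cases r hr with h3 | h3 <;> rw [e, h2, h3] at hs <;>
          exact absurd hs (by decide)
      have := hd _ _ _ h8
      by_cases h1 : red8 s x ^ 2 = 1
      · simp [h, h1]
      · by_cases h2 : red8 s y ^ 2 = 1
        · simp [h, h1, h2]
        · simp [h, h1, h2, this h1 h2]
    · simp [h]
  simp only [hsplit, Finset.sum_add_distrib]
  rw [sum_rot (fun x y z => if True ∧ red8 s x ^ 2 = 1 ∧ x ^ 2 + (y ^ 2 + z ^ 2) = a then 1 else 0)]
  have hc : ∀ x : ZMod (2 ^ (s + 3)), (∑ y : ZMod (2 ^ (s + 3)), ∑ z : ZMod (2 ^ (s + 3)),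
      if red8 s x ^ 2 ≠ 1 ∧ red8 s y ^ 2 = 1 ∧ y ^ 2 + (x ^ 2 + z ^ 2) = a then 1 else 0)
      = (∑ z : ZMod (2 ^ (s + 3)), ∑ y : ZMod (2 ^ (s + 3)),
      if red8 s x ^ 2 ≠ 1 ∧ red8 s y ^ 2 = 1 ∧ y ^ 2 + (x ^ 2 + z ^ 2) = a then 1 else 0) :=
    fun x => Finset.sum_comm
  simp only [hc, sum_odd, map_add, map_pow, ha]
  rw [sum_red8_two s (fun y z => if True ∧ 1 + (y ^ 2 + z ^ 2) = 5 then 4 else 0),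
    sum_red8_two s (fun x z => if x ^ 2 ≠ 1 ∧ 1 + (x ^ 2 + z ^ 2) = 5 then 4 else 0),
    sum_red8_two s (fun x y => if (x ^ 2 ≠ 1 ∧ y ^ 2 ≠ 1) ∧ 1 + (x ^ 2 + y ^ 2) = 5 then 4 else 0),
    ← mul_add, ← mul_add, table3]

/-- Sums of four squares. -/
lemma count4 (s : ℕ) (a : ZMod (2 ^ (s + 3))) (ha : red8 s a ^ 2 = 1) :
    (∑ x : ZMod (2 ^ (s + 3)), ∑ y : ZMod (2 ^ (s + 3)), ∑ z : ZMod (2 ^ (s + 3)),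
      ∑ w : ZMod (2 ^ (s + 3)),
      if x ^ 2 + y ^ 2 + z ^ 2 + w ^ 2 = a then 1 else 0) = 2 ^ (3 * s) * 512 := by
  have hsplit : ∀ x y z w : ZMod (2 ^ (s + 3)),
      (if x ^ 2 + y ^ 2 + z ^ 2 + w ^ 2 = a then 1 else 0)
      = (if True ∧ red8 s x ^ 2 = 1 ∧ x ^ 2 + (y ^ 2 + z ^ 2 + w ^ 2) = a then 1 else 0)
      + ((if red8 s x ^ 2 ≠ 1 ∧ red8 s y ^ 2 = 1 ∧
          y ^ 2 + (x ^ 2 + z ^ 2 + w ^ 2) = a then 1 else 0)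
      + ((if (red8 s x ^ 2 ≠ 1 ∧ red8 s y ^ 2 ≠ 1) ∧ red8 s z ^ 2 = 1 ∧
          z ^ 2 + (x ^ 2 + y ^ 2 + w ^ 2) = a then 1 else 0)
      + (if (red8 s x ^ 2 ≠ 1 ∧ red8 s y ^ 2 ≠ 1 ∧ red8 s z ^ 2 ≠ 1) ∧ red8 s w ^ 2 = 1 ∧
          w ^ 2 + (x ^ 2 + y ^ 2 + z ^ 2) = a then 1 else 0))) := by
    intro x y z w
    have e1 : x ^ 2 + (y ^ 2 + z ^ 2 + w ^ 2) = x ^ 2 + y ^ 2 + z ^ 2 + w ^ 2 := by ring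
    have e2 : y ^ 2 + (x ^ 2 + z ^ 2 + w ^ 2) = x ^ 2 + y ^ 2 + z ^ 2 + w ^ 2 := by ring
    have e3 : z ^ 2 + (x ^ 2 + y ^ 2 + w ^ 2) = x ^ 2 + y ^ 2 + z ^ 2 + w ^ 2 := by ring
    have e4 : w ^ 2 + (x ^ 2 + y ^ 2 + z ^ 2) = x ^ 2 + y ^ 2 + z ^ 2 + w ^ 2 := by ring
    rw [e1, e2, e3, e4]
    by_cases h : x ^ 2 + y ^ 2 + z ^ 2 + w ^ 2 = a
    · have h8 := congrArg (red8 s) h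
      simp only [map_add, map_pow] at h8
      rw [← h8] at ha
      have hd : ∀ p q r t : ZMod 8, (p ^ 2 + q ^ 2 + r ^ 2 + t ^ 2) ^ 2 = 1 →
          p ^ 2 ≠ 1 → q ^ 2 ≠ 1 → r ^ 2 ≠ 1 → t ^ 2 = 1 := by
        intro p q r t hs hp hq hr
        by_contra ht
        rcases sq_cases p hp with e | e <;> rcases sq_cases q hq with h2 | h2 <;>
          rcases sq_cases r hr with h3 | h3 <;> rcases sq_cases t ht with h4 | h4 <;>
          rw [e, h2, h3, h4] at hs <;> exact absurd hs (by decide)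
      have := hd _ _ _ _ ha
      by_cases h1 : red8 s x ^ 2 = 1
      · simp [h, h1]
      · by_cases h2 : red8 s y ^ 2 = 1
        · simp [h, h1, h2]
        · by_cases h3 : red8 s z ^ 2 = 1
          · simp [h, h1, h2, h3]
          · simp [h, h1, h2, h3, this h1 h2 h3]
    · simp [h]
  simp only [hsplit, Finset.sum_add_distrib]
  rw [sum_rot_four (fun x y z w => if True ∧ red8 s x ^ 2 = 1 ∧
    x ^ 2 + (y ^ 2 + z ^ 2 + w ^ 2) = a then 1 else 0)]
  have hc : ∀ x : ZMod (2 ^ (s + 3)), (∑ y : ZMod (2 ^ (s + 3)), ∑ z : ZMod (2 ^ (s + 3)),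
      ∑ w : ZMod (2 ^ (s + 3)),
      if red8 s x ^ 2 ≠ 1 ∧ red8 s y ^ 2 = 1 ∧ y ^ 2 + (x ^ 2 + z ^ 2 + w ^ 2) = a then 1 else 0)
      = (∑ z : ZMod (2 ^ (s + 3)), ∑ w : ZMod (2 ^ (s + 3)), ∑ y : ZMod (2 ^ (s + 3)),
      if red8 s x ^ 2 ≠ 1 ∧ red8 s y ^ 2 = 1 ∧ y ^ 2 + (x ^ 2 + z ^ 2 + w ^ 2) = a then 1 else 0) :=
    fun x => sum_rot _
  have hc2 : ∀ x y : ZMod (2 ^ (s + 3)), (∑ z : ZMod (2 ^ (s + 3)),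
      ∑ w : ZMod (2 ^ (s + 3)),
      if (red8 s x ^ 2 ≠ 1 ∧ red8 s y ^ 2 ≠ 1) ∧ red8 s z ^ 2 = 1 ∧
          z ^ 2 + (x ^ 2 + y ^ 2 + w ^ 2) = a then 1 else 0)
      = (∑ w : ZMod (2 ^ (s + 3)), ∑ z : ZMod (2 ^ (s + 3)),
      if (red8 s x ^ 2 ≠ 1 ∧ red8 s y ^ 2 ≠ 1) ∧ red8 s z ^ 2 = 1 ∧
          z ^ 2 + (x ^ 2 + y ^ 2 + w ^ 2) = a then 1 else 0) :=
    fun x y => Finset.sum_comm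
  simp only [hc, hc2, sum_odd, map_add, map_pow]
  generalize red8 s a = b at ha
  rw [sum_red8_three s (fun y z w => if True ∧ 1 + (y ^ 2 + z ^ 2 + w ^ 2) = b then 4 else 0),
    sum_red8_three s (fun x z w =>
      if x ^ 2 ≠ 1 ∧ 1 + (x ^ 2 + z ^ 2 + w ^ 2) = b then 4 else 0),
    sum_red8_three s (fun x y w =>
      if (x ^ 2 ≠ 1 ∧ y ^ 2 ≠ 1) ∧ 1 + (x ^ 2 + y ^ 2 + w ^ 2) = b then 4 else 0),
    sum_red8_three s (fun x y z =>
      if (x ^ 2 ≠ 1 ∧ y ^ 2 ≠ 1 ∧ z ^ 2 ≠ 1) ∧ 1 + (x ^ 2 + y ^ 2 + z ^ 2) = b then 4 else 0),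
    ← mul_add, ← mul_add, ← mul_add, table4 b ha]

/-- The quaternion change of variables `y = z x`, with `z` purely imaginary. -/
def quatEquiv {R : Type*} [CommRing R] (a b e : R) (he : a * e = 1) :
    {X : Matrix (Fin 2) (Fin 4) R // X * Xᵀ = !![a, 0; 0, b]} ≃
    {p : R × R × R × R // p.1 ^ 2 + p.2.1 ^ 2 + p.2.2.1 ^ 2 + p.2.2.2 ^ 2 = a} ×
    {q : R × R × R // q.1 ^ 2 + q.2.1 ^ 2 + q.2.2 ^ 2 = a * b} where
  toFun X := by
    have hX := X.2
    refine ⟨⟨(X.1 0 0, X.1 0 1, X.1 0 2, X.1 0 3), ?_⟩,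
      ⟨(-X.1 1 0 * X.1 0 1 + X.1 1 1 * X.1 0 0 - X.1 1 2 * X.1 0 3 + X.1 1 3 * X.1 0 2,
        -X.1 1 0 * X.1 0 2 + X.1 1 1 * X.1 0 3 + X.1 1 2 * X.1 0 0 - X.1 1 3 * X.1 0 1,
        -X.1 1 0 * X.1 0 3 - X.1 1 1 * X.1 0 2 + X.1 1 2 * X.1 0 1 + X.1 1 3 * X.1 0 0), ?_⟩⟩
    · have h := congrFun (congrFun hX 0) 0
      simp [Matrix.mul_apply, Fin.sum_univ_four] at h
      linear_combination h
    · have h := congrFun (congrFun hX 0) 0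
      have h1 := congrFun (congrFun hX 0) 1
      have h2 := congrFun (congrFun hX 1) 1
      simp [Matrix.mul_apply, Fin.sum_univ_four] at h h1 h2
      linear_combination (X.1 1 0 ^ 2 + X.1 1 1 ^ 2 + X.1 1 2 ^ 2 + X.1 1 3 ^ 2) * h + a * h2 + (-(X.1 0 0 * X.1 1 0 + X.1 0 1 * X.1 1 1 + X.1 0 2 * X.1 1 2
        + X.1 0 3 * X.1 1 3)) * h1
  invFun pq := by
    refine ⟨!![pq.1.1.1, pq.1.1.2.1, pq.1.1.2.2.1, pq.1.1.2.2.2;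
      e * (-pq.2.1.1 * pq.1.1.2.1 - pq.2.1.2.1 * pq.1.1.2.2.1 - pq.2.1.2.2 * pq.1.1.2.2.2),
      e * (pq.2.1.1 * pq.1.1.1 + pq.2.1.2.1 * pq.1.1.2.2.2 - pq.2.1.2.2 * pq.1.1.2.2.1),
      e * (-pq.2.1.1 * pq.1.1.2.2.2 + pq.2.1.2.1 * pq.1.1.1 + pq.2.1.2.2 * pq.1.1.2.1),
      e * (pq.2.1.1 * pq.1.1.2.2.1 - pq.2.1.2.1 * pq.1.1.2.1 + pq.2.1.2.2 * pq.1.1.1)], ?_⟩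
    obtain ⟨⟨⟨x0, x1, x2, x3⟩, hp⟩, ⟨⟨z1, z2, z3⟩, hq⟩⟩ := pq
    simp only at hp hq
    ext i j
    fin_cases i <;> fin_cases j <;> simp [Matrix.mul_apply, Fin.sum_univ_four]
    · linear_combination hp
    · ring
    · ring
    · linear_combination (e ^ 2 * (z1 ^ 2 + z2 ^ 2 + z3 ^ 2)) * hp + e ^ 2 * a * hq
        + b * (a * e + 1) * he
  left_inv := by
    rintro ⟨X, hX⟩
    have h := congrFun (congrFun hX 0) 0
    have h1 := congrFun (congrFun hX 0) 1
    simp [Matrix.mul_apply, Fin.sum_univ_four] at h h1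
    apply Subtype.ext
    ext i j
    fin_cases i <;> fin_cases j <;> simp
    · linear_combination (e * X 1 0) * h + X 1 0 * he - e * X 0 0 * h1
    · linear_combination (e * X 1 1) * h + X 1 1 * he - e * X 0 1 * h1
    · linear_combination (e * X 1 2) * h + X 1 2 * he - e * X 0 2 * h1
    · linear_combination (e * X 1 3) * h + X 1 3 * he - e * X 0 3 * h1
  right_inv := by
    rintro ⟨⟨⟨x0, x1, x2, x3⟩, hp⟩, ⟨⟨z1, z2, z3⟩, hq⟩⟩
    simp only at hp hq
    refine Prod.ext (Subtype.ext ?_) (Subtype.ext ?_)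
    · simp
    · simp only [Prod.mk.injEq]
      simp
      refine ⟨?_, ?_, ?_⟩
      · linear_combination (e * z1) * hp + z1 * he
      · linear_combination (e * z2) * hp + z2 * he
      · linear_combination (e * z3) * hp + z3 * he

/-- Dyadic stabilization: for every odd integer `n` and every `t ≥ 3`, the number of
`2 × 4` matrices `X` over `ℤ/2^tℤ` with `X Xᵀ = Gₙ = diag(n+2, n−2) (mod 2^t)`
equals `(3/2) · 2^{5t} = 3 · 2^{5t−1}`; in particular the dyadic solution count
defining `γ₂` stabilizes already at `t = 3`. -/
theorem dyadic_count_stabilizes (n : ℤ) (hodd : Odd n) (t : ℕ) (ht : 3 ≤ t) :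
    Nat.card {X : Matrix (Fin 2) (Fin 4) (ZMod (2 ^ t)) //
        X * Xᵀ = !![(n : ZMod (2 ^ t)) + 2, 0; 0, (n : ZMod (2 ^ t)) - 2]}
      = 3 * 2 ^ (5 * t - 1) := by
  obtain ⟨s, rfl⟩ : ∃ s, t = s + 3 := ⟨t - 3, by omega⟩
  have hodd2 : Odd (n + 2) := by
    obtain ⟨k, hk⟩ := hodd
    exact ⟨k + 1, by rw [hk]; ring⟩
  have hcop : IsCoprime (n + 2) ((2:ℤ) ^ (s + 3)) :=
    (IsCoprime.pow_left (Int.isCoprime_two_left.mpr hodd2)).symm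
  obtain ⟨e, f, hef⟩ := hcop
  have he : ((n : ZMod (2 ^ (s + 3))) + 2) * (e : ZMod (2 ^ (s + 3))) = 1 := by
    have h := congrArg (Int.cast : ℤ → ZMod (2 ^ (s + 3))) hef
    have h0 : ((2 : ZMod (2 ^ (s + 3)))) ^ (s + 3) = 0 := by
      have := ZMod.natCast_self (2 ^ (s + 3))
      exact_mod_cast this
    push_cast at h
    rw [h0] at h
    linear_combination h
  have hn : ((n : ZMod 8)) ^ 2 = 1 := (sq_one_iff_odd n).mpr hodd
  have c4 := count4 s ((n : ZMod (2 ^ (s + 3))) + 2) (by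
    have := (sq_one_iff_odd (n + 2)).mpr hodd2
    push_cast at this
    rw [map_add, map_intCast, map_ofNat]
    exact this)
  have c3 := count3 s (((n : ZMod (2 ^ (s + 3))) + 2) * ((n : ZMod (2 ^ (s + 3))) - 2)) (by
    have h5 : ∀ v : ZMod 8, v ^ 2 = 1 → (v + 2) * (v - 2) = 5 := by decide
    rw [map_mul, map_add, map_sub, map_intCast, map_ofNat]
    exact h5 _ hn)
  rw [Nat.card_congr (quatEquiv _ _ _ he), Nat.card_prod, Nat.card_eq_fintype_card,
    Nat.card_eq_fintype_card, Fintype.card_subtype, Fintype.card_subtype,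
    Finset.card_filter, Finset.card_filter]
  simp only [Fintype.sum_prod_type]
  rw [c4, c3]
  have : 5 * (s + 3) - 1 = 3 * s + 2 * s + 14 := by omega
  rw [this]
  ring
end
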